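/- arXiv:2202.07531 — 7 statements merged into one kernel-verified Lean document; each statement's English description precedes it below -/
import Mathlib

section
/- For all a, b ∈ ℝ¹², one has aᵀ 𝒢(b) = −bᵀ 𝒢(a), i.e. 𝒢(b)ᵀ a = −𝒢(a)ᵀ b as vectors in ℝ¹². In particular, aᵀ 𝒢(a) = 0 for every a ∈ ℝ¹². -/
open Matrix

/-- The skew-symmetric matrix of the cross product: `hat u ζ = u × ζ`. -/
def hat (u : Fin 3 → ℝ) : Matrix (Fin 3) (Fin 3) ℝ :=
  !![0, -u 2, u 1; u 2, 0, -u 0; -u 1, u 0, 0]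

/-- Index type for `ℝ¹²` split into four blocks of `ℝ³`. -/
abbrev I12 := (Fin 3 ⊕ Fin 3) ⊕ (Fin 3 ⊕ Fin 3)

def comp1 (u : I12 → ℝ) : Fin 3 → ℝ := fun i => u (Sum.inl (Sum.inl i))
def comp2 (u : I12 → ℝ) : Fin 3 → ℝ := fun i => u (Sum.inl (Sum.inr i))
def comp3 (u : I12 → ℝ) : Fin 3 → ℝ := fun i => u (Sum.inr (Sum.inl i))
def comp4 (u : I12 → ℝ) : Fin 3 → ℝ := fun i => u (Sum.inr (Sum.inr i))

/-- The matrix `𝒢(u)` encoding the quadratic nonlinearity of the IGEB model. -/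
def calG (u : I12 → ℝ) : Matrix I12 I12 ℝ :=
  -(Matrix.fromBlocks
      (Matrix.fromBlocks (hat (comp2 u)) 0 (hat (comp1 u)) (hat (comp2 u)))
      (Matrix.fromBlocks 0 (hat (comp3 u)) (hat (comp3 u)) (hat (comp4 u)))
      0
      (Matrix.fromBlocks (hat (comp2 u)) (hat (comp1 u)) 0 (hat (comp2 u))))

theorem transpose_hat (u : Fin 3 → ℝ) : (hat u)ᵀ = -hat u := by
  ext i j
  fin_cases i <;> fin_cases j <;> simp [hat]

theorem hat_mulVec (u v : Fin 3 → ℝ) : hat u *ᵥ v = u ⨯₃ v := by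
  ext i
  fin_cases i <;> simp [hat, cross_apply, mulVec_eq_sum, Fin.sum_univ_three] <;> ring

theorem transpose_calG (u : I12 → ℝ) :
    (calG u)ᵀ = fromBlocks
      (fromBlocks (hat (comp2 u)) (hat (comp1 u)) 0 (hat (comp2 u)))
      0
      (fromBlocks 0 (hat (comp3 u)) (hat (comp3 u)) (hat (comp4 u)))
      (fromBlocks (hat (comp2 u)) 0 (hat (comp1 u)) (hat (comp2 u))) := by
  simp only [calG, transpose_neg, fromBlocks_transpose, transpose_hat, transpose_zero,
    fromBlocks_neg, neg_neg, neg_zero]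

theorem transpose_calG_mulVec (u v : I12 → ℝ) :
    (calG u)ᵀ *ᵥ v = Sum.elim
      (Sum.elim (comp2 u ⨯₃ comp1 v + comp1 u ⨯₃ comp2 v) (comp2 u ⨯₃ comp2 v))
      (Sum.elim (comp3 u ⨯₃ comp2 v + comp2 u ⨯₃ comp3 v)
        (comp3 u ⨯₃ comp1 v + comp4 u ⨯₃ comp2 v + comp1 u ⨯₃ comp3 v
          + comp2 u ⨯₃ comp4 v)) := by
  have blocks : v = Sum.elim (Sum.elim (comp1 v) (comp2 v)) (Sum.elim (comp3 v) (comp4 v)) := by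
    ext ((_ | _) | (_ | _)) <;> rfl
  conv_lhs => rw [blocks]
  simp only [transpose_calG, fromBlocks_mulVec, Sum.elim_comp_inl, Sum.elim_comp_inr, hat_mulVec,
    zero_mulVec, zero_add, add_zero, ← Sum.elim_add_add, ← add_assoc]

/- In each block, swapping `u` and `v` permutes the cross products `uᵢ × vⱼ` up to a sign: `uᵢ × vⱼ`
occurs exactly when `uⱼ × vᵢ` does. -/
theorem transpose_calG_mulVec_anticomm (u v : I12 → ℝ) :
    (calG u)ᵀ *ᵥ v = -((calG v)ᵀ *ᵥ u) := by
  simp only [transpose_calG_mulVec, ← Sum.elim_neg_neg, neg_add, cross_anticomm]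
  congr 2 <;> abel

theorem transpose_calG_mulVec_self (u : I12 → ℝ) : (calG u)ᵀ *ᵥ u = 0 :=
  self_eq_neg.mp (transpose_calG_mulVec_anticomm u u)

/-- For all `a, b ∈ ℝ¹²`, `aᵀ 𝒢(b) = −bᵀ 𝒢(a)`, i.e. `𝒢(b)ᵀ a = −𝒢(a)ᵀ b`;
in particular `aᵀ 𝒢(a) = 0`. -/
theorem stmt_3 (a b : I12 → ℝ) :
    (calG b)ᵀ *ᵥ a = -((calG a)ᵀ *ᵥ b) ∧ (calG a)ᵀ *ᵥ a = 0 :=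
  ⟨transpose_calG_mulVec_anticomm b a, transpose_calG_mulVec_self a⟩
end

section
/- Let ℓ > 0 and let Q^𝒫 : [0, ℓ] → ℝ^{12×12} be continuous with Q^𝒫(x) symmetric positive definite for every x ∈ [0, ℓ]; define ḡ(x, u) = Q^𝒫(x)^{-1} 𝒢(u) Q^𝒫(x) u for x ∈ [0, ℓ] and u ∈ ℝ¹². Then for every α > 0 there exists ω_α ∈ ℝ such that for all continuous functions φ, ψ : [0, ℓ] → ℝ¹² satisfying |φ(x)| ≤ α and |ψ(x)| ≤ α for all x ∈ [0, ℓ], one has ∫₀^ℓ ⟨ḡ(x, φ(x)) − ḡ(x, ψ(x)), Q^𝒫(x)(φ(x) − ψ(x))⟩ dx ≤ ω_α ∫₀^ℓ ⟨φ(x) − ψ(x), Q^𝒫(x)(φ(x) − ψ(x))⟩ dx. -/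
open Matrix

/-- The nonlinearity `ḡ(x, u) = Q^𝒫(x)⁻¹ 𝒢(u) Q^𝒫(x) u` of the IGEB model. -/
noncomputable def gbar (Q : ℝ → Matrix I12 I12 ℝ) (x : ℝ) (u : I12 → ℝ) : I12 → ℝ :=
  ((Q x)⁻¹ * calG u * Q x) *ᵥ u

/-!
Let `G u` be a matrix depending linearly on `u`, as `𝒢(u)` does. With `v = a - b`, linearity and the
symmetry of the weight `M` turn the increment of `u ↦ M⁻¹ (G u) M u` from `b` to `a`, paired with
`M v`, into `⟨G v (M a) + G b (M v), v⟩`, in which `M⁻¹` has disappeared and which is quadratic in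
`v`. Both this form and the energy `⟨v, M v⟩` are continuous, so their quotient is bounded for `v`
on the unit sphere, `a` and `b` in a bounded set and `M` in a compact set of positive definite
matrices. Homogeneity extends the bound to all `v`; then integrate.
-/

open MeasureTheory

theorem exists_forall_le_mul_of_homogeneous {P E : Type*} [TopologicalSpace P]
    [NormedAddCommGroup E] [NormedSpace ℝ E] [ProperSpace E] {f g : P → E → ℝ} {k : ℕ}
    (hk : k ≠ 0) {S : Set P} (hS : IsCompact S)
    (hf : ContinuousOn (fun q : P × E => f q.1 q.2) (S ×ˢ Set.univ))
    (hg : ContinuousOn (fun q : P × E => g q.1 q.2) (S ×ˢ Set.univ))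
    (hf_smul : ∀ p ∈ S, ∀ (c : ℝ) v, f p (c • v) = c ^ k * f p v)
    (hg_smul : ∀ p ∈ S, ∀ (c : ℝ) v, g p (c • v) = c ^ k * g p v)
    (hg_pos : ∀ p ∈ S, ∀ v ≠ 0, 0 < g p v) :
    ∃ ω : ℝ, ∀ p ∈ S, ∀ v, f p v ≤ ω * g p v := by
  have sphere_subset : S ×ˢ Metric.sphere (0 : E) 1 ⊆ S ×ˢ Set.univ :=
    Set.prod_mono_right (Set.subset_univ _)
  have quotient_continuousOn : ContinuousOn
      (fun q : P × E => f q.1 q.2 / g q.1 q.2) (S ×ˢ Metric.sphere (0 : E) 1) :=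
    (hf.mono sphere_subset).div (hg.mono sphere_subset) fun q hq =>
      (hg_pos q.1 hq.1 q.2 (ne_zero_of_mem_unit_sphere ⟨q.2, hq.2⟩)).ne'
  obtain ⟨ω, hω⟩ := (hS.prod (isCompact_sphere (0 : E) 1)).bddAbove_image quotient_continuousOn
  have le_on_sphere (p : P) (hp : p ∈ S) (w : E) (hw : ‖w‖ = 1) : f p w ≤ ω * g p w := by
    have w_ne_zero : w ≠ 0 := norm_ne_zero_iff.1 (hw ▸ one_ne_zero)
    rw [← div_le_iff₀ (hg_pos p hp w w_ne_zero)]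
    exact hω ⟨(p, w), ⟨hp, mem_sphere_zero_iff_norm.2 hw⟩, rfl⟩
  refine ⟨ω, fun p hp v => ?_⟩
  obtain rfl | hv := eq_or_ne v 0
  · have hf_zero : f p 0 = 0 := by simpa [hk] using hf_smul p hp 0 0
    have hg_zero : g p 0 = 0 := by simpa [hk] using hg_smul p hp 0 0
    rw [hf_zero, hg_zero, mul_zero]
  · have v_eq : v = ‖v‖ • ‖v‖⁻¹ • v := (smul_inv_smul₀ (norm_ne_zero_iff.2 hv) v).symm
    rw [v_eq, hf_smul p hp, hg_smul p hp, mul_left_comm]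
    exact mul_le_mul_of_nonneg_left (le_on_sphere p hp _ (norm_smul_inv_norm (𝕜 := ℝ) hv))
      (pow_nonneg (norm_nonneg v) k)

theorem integrable_comp_of_ae_mem_isCompact {X P E : Type*} [MeasurableSpace X] {μ : Measure X}
    [IsFiniteMeasure μ] [TopologicalSpace P] [NormedAddCommGroup E] {F : P → E}
    (hF : Continuous F) {C : Set P} (hC : IsCompact C) {u : X → P}
    (hu : AEStronglyMeasurable u μ) (huC : ∀ᵐ x ∂μ, u x ∈ C) :
    Integrable (fun x => F (u x)) μ := by
  obtain ⟨r, hr⟩ := hC.exists_bound_of_continuousOn hF.continuousOn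
  exact .of_bound (hF.comp_aestronglyMeasurable hu) r (huC.mono fun x hx => hr _ hx)

theorem isBounded_setOf_sqrt_dotProduct_self_le {n : Type*} [Fintype n] (α : ℝ) :
    Bornology.IsBounded {u : n → ℝ | √(u ⬝ᵥ u) ≤ α} := by
  refine isBounded_iff_forall_norm_le.2 ⟨α, fun u hu => ?_⟩
  refine (pi_norm_le_iff_of_nonneg ((Real.sqrt_nonneg _).trans hu)).2 fun i => ?_
  have sq_le_dotProduct : u i ^ 2 ≤ u ⬝ᵥ u := by
    rw [sq]
    exact Finset.single_le_sum (f := fun j => u j * u j) (fun j _ => mul_self_nonneg (u j))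
      (Finset.mem_univ i)
  exact (Real.abs_le_sqrt sq_le_dotProduct).trans hu

section Algebra

variable {n R : Type*} [Fintype n] [CommRing R]

/-- For `v = a - b`, the increment of `u ↦ M⁻¹ (G u) M u` from `b` to `a` paired with `M v`
(see `conjNonlinearity_sub_dotProduct_mulVec`). Keeping `v` separate from `a` and `b` makes the form
homogeneous in `v` while `a` and `b` range over a bounded set. -/
def incrementForm (G : (n → R) →ₗ[R] Matrix n n R) (M : Matrix n n R) (a b v : n → R) : R :=
  (G v *ᵥ (M *ᵥ a) + G b *ᵥ (M *ᵥ v)) ⬝ᵥ v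

theorem incrementForm_smul (G : (n → R) →ₗ[R] Matrix n n R) (M : Matrix n n R) (a b : n → R)
    (c : R) (v : n → R) : incrementForm G M a b (c • v) = c ^ 2 * incrementForm G M a b v := by
  simp only [incrementForm, map_smul, smul_mulVec, mulVec_smul, ← smul_add, smul_dotProduct,
    dotProduct_smul, smul_eq_mul]
  ring

theorem smul_dotProduct_mulVec_smul (M : Matrix n n R) (c : R) (v : n → R) :
    (c • v) ⬝ᵥ (M *ᵥ (c • v)) = c ^ 2 * (v ⬝ᵥ (M *ᵥ v)) := by
  simp only [mulVec_smul, smul_dotProduct, dotProduct_smul, smul_eq_mul]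
  ring

variable [DecidableEq n]

/-- The nonlinearity `u ↦ M⁻¹ (G u) M u` for a linear family of matrices `G`; it is the nonlinearity
`ḡ(x, ·)` of the beam model when `M = Q^𝒫(x)` and `G = 𝒢`. -/
noncomputable def conjNonlinearity (G : (n → R) →ₗ[R] Matrix n n R) (M : Matrix n n R)
    (u : n → R) : n → R :=
  (M⁻¹ * G u * M) *ᵥ u

theorem inv_mulVec_dotProduct_mulVec {M : Matrix n n R} (hM : M.IsSymm) (hdet : IsUnit M.det)
    (w z : n → R) : (M⁻¹ *ᵥ w) ⬝ᵥ (M *ᵥ z) = w ⬝ᵥ z := by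
  rw [dotProduct_mulVec, ← mulVec_transpose, hM.eq, mulVec_mulVec, mul_nonsing_inv _ hdet,
    one_mulVec]

theorem conjNonlinearity_sub_dotProduct_mulVec (G : (n → R) →ₗ[R] Matrix n n R)
    {M : Matrix n n R} (hM : M.IsSymm) (hdet : IsUnit M.det) (a b : n → R) :
    (conjNonlinearity G M a - conjNonlinearity G M b) ⬝ᵥ (M *ᵥ (a - b)) =
      incrementForm G M a b (a - b) := by
  have factor_inv : conjNonlinearity G M a - conjNonlinearity G M b =
      M⁻¹ *ᵥ (G a *ᵥ (M *ᵥ a) - G b *ᵥ (M *ᵥ b)) := by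
    simp only [conjNonlinearity, mulVec_sub, mulVec_mulVec, Matrix.mul_assoc]
  have split_increment : G a *ᵥ (M *ᵥ a) - G b *ᵥ (M *ᵥ b) =
      G (a - b) *ᵥ (M *ᵥ a) + G b *ᵥ (M *ᵥ (a - b)) := by
    rw [map_sub, sub_mulVec, mulVec_sub, mulVec_sub, sub_add_sub_cancel]
  rw [factor_inv, inv_mulVec_dotProduct_mulVec hM hdet, split_increment, incrementForm]

end Algebra

section Estimates

variable {n : Type*} [Fintype n]

@[fun_prop]
theorem continuous_incrementForm {P : Type*} [TopologicalSpace P]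
    (G : (n → ℝ) →ₗ[ℝ] Matrix n n ℝ) {M : P → Matrix n n ℝ} {a b v : P → n → ℝ}
    (hM : Continuous M) (ha : Continuous a) (hb : Continuous b) (hv : Continuous v) :
    Continuous fun p => incrementForm G (M p) (a p) (b p) (v p) := by
  have hG : Continuous G := G.continuous_of_finiteDimensional
  unfold incrementForm
  fun_prop

theorem exists_incrementForm_le_mul (G : (n → ℝ) →ₗ[ℝ] Matrix n n ℝ)
    {S : Set (Matrix n n ℝ)} (hS : IsCompact S) (hS_pos : ∀ M ∈ S, M.PosDef)
    {C : Set (n → ℝ)} (hC : IsCompact C) :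
    ∃ ω : ℝ, ∀ M ∈ S, ∀ a ∈ C, ∀ b ∈ C, ∀ v,
      incrementForm G M a b v ≤ ω * (v ⬝ᵥ (M *ᵥ v)) := by
  obtain ⟨ω, hω⟩ := exists_forall_le_mul_of_homogeneous two_ne_zero (hS.prod (hC.prod hC))
    (f := fun (p : Matrix n n ℝ × (n → ℝ) × (n → ℝ)) v => incrementForm G p.1 p.2.1 p.2.2 v)
    (g := fun p v => v ⬝ᵥ (p.1 *ᵥ v)) (by fun_prop) (by fun_prop)
    (fun p _ => incrementForm_smul G p.1 p.2.1 p.2.2)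
    (fun p _ => smul_dotProduct_mulVec_smul p.1)
    (fun p hp v hv => by simpa using (hS_pos p.1 hp.1).dotProduct_mulVec_pos hv)
  exact ⟨ω, fun M hM a ha b hb => hω (M, a, b) ⟨hM, ha, hb⟩⟩

theorem stmt_5_general [DecidableEq n] {X : Type*} [MeasurableSpace X]
    (G : (n → ℝ) →ₗ[ℝ] Matrix n n ℝ) {S : Set (Matrix n n ℝ)} (hS : IsCompact S)
    (hS_pos : ∀ M ∈ S, M.PosDef) {B : Set (n → ℝ)} (hB : Bornology.IsBounded B) :
    ∃ ω : ℝ, ∀ (μ : Measure X) [IsFiniteMeasure μ] (Q : X → Matrix n n ℝ) (φ ψ : X → n → ℝ),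
      AEStronglyMeasurable Q μ → AEStronglyMeasurable φ μ → AEStronglyMeasurable ψ μ →
      (∀ᵐ x ∂μ, Q x ∈ S) → (∀ᵐ x ∂μ, φ x ∈ B) → (∀ᵐ x ∂μ, ψ x ∈ B) →
      ∫ x, (conjNonlinearity G (Q x) (φ x) - conjNonlinearity G (Q x) (ψ x)) ⬝ᵥ
          (Q x *ᵥ (φ x - ψ x)) ∂μ
        ≤ ω * ∫ x, (φ x - ψ x) ⬝ᵥ (Q x *ᵥ (φ x - ψ x)) ∂μ := by
  have closure_compact : IsCompact (closure B) := hB.isCompact_closure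
  obtain ⟨ω, hω⟩ := exists_incrementForm_le_mul G hS hS_pos closure_compact
  refine ⟨ω, fun μ _ Q φ ψ hQ hφ hψ hQS hφB hψB => ?_⟩
  have mem_compact : ∀ᵐ x ∂μ, (Q x, φ x, ψ x) ∈ S ×ˢ closure B ×ˢ closure B := by
    filter_upwards [hQS, hφB, hψB] with x hQx hφx hψx
    exact ⟨hQx, subset_closure hφx, subset_closure hψx⟩
  have integrable_of_continuous {F : Matrix n n ℝ × (n → ℝ) × (n → ℝ) → ℝ} (hF : Continuous F) :
      Integrable (fun x => F (Q x, φ x, ψ x)) μ :=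
    integrable_comp_of_ae_mem_isCompact hF
      (hS.prod (closure_compact.prod closure_compact))
      (hQ.prodMk (hφ.prodMk hψ)) mem_compact
  have increment_integrable :
      Integrable (fun x => incrementForm G (Q x) (φ x) (ψ x) (φ x - ψ x)) μ :=
    integrable_of_continuous (F := fun p => incrementForm G p.1 p.2.1 p.2.2 (p.2.1 - p.2.2))
      (by fun_prop)
  have energy_integrable : Integrable (fun x => (φ x - ψ x) ⬝ᵥ (Q x *ᵥ (φ x - ψ x))) μ :=
    integrable_of_continuous (F := fun p => (p.2.1 - p.2.2) ⬝ᵥ (p.1 *ᵥ (p.2.1 - p.2.2)))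
      (by fun_prop)
  calc
    _ = ∫ x, incrementForm G (Q x) (φ x) (ψ x) (φ x - ψ x) ∂μ := by
      refine integral_congr_ae (hQS.mono fun x hQx => ?_)
      have hpos := hS_pos _ hQx
      exact conjNonlinearity_sub_dotProduct_mulVec G (by simpa using hpos.isHermitian)
        hpos.det_pos.ne'.isUnit _ _
    _ ≤ ∫ x, ω * ((φ x - ψ x) ⬝ᵥ (Q x *ᵥ (φ x - ψ x))) ∂μ := by
      refine integral_mono_ae increment_integrable (energy_integrable.const_mul ω) ?_
      filter_upwards [hQS, hφB, hψB] with x hQx hφx hψx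
      exact hω _ hQx _ (subset_closure hφx) _ (subset_closure hψx) _
    _ = ω * ∫ x, (φ x - ψ x) ⬝ᵥ (Q x *ᵥ (φ x - ψ x)) ∂μ := integral_const_mul _ _

end Estimates

theorem hat_add (u v : Fin 3 → ℝ) : hat (u + v) = hat u + hat v := by
  ext i j
  fin_cases i <;> fin_cases j <;> simp [hat, add_comm]

theorem hat_smul (c : ℝ) (u : Fin 3 → ℝ) : hat (c • u) = c • hat u := by
  ext i j
  fin_cases i <;> fin_cases j <;> simp [hat]

theorem calG_add (u v : I12 → ℝ) : calG (u + v) = calG u + calG v := by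
  have hcomp1 : comp1 (u + v) = comp1 u + comp1 v := rfl
  have hcomp2 : comp2 (u + v) = comp2 u + comp2 v := rfl
  have hcomp3 : comp3 (u + v) = comp3 u + comp3 v := rfl
  have hcomp4 : comp4 (u + v) = comp4 u + comp4 v := rfl
  simp only [calG, hcomp1, hcomp2, hcomp3, hcomp4, hat_add, ← neg_add, fromBlocks_add, add_zero]

theorem calG_smul (c : ℝ) (u : I12 → ℝ) : calG (c • u) = c • calG u := by
  have hcomp1 : comp1 (c • u) = c • comp1 u := rfl
  have hcomp2 : comp2 (c • u) = c • comp2 u := rfl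
  have hcomp3 : comp3 (c • u) = c • comp3 u := rfl
  have hcomp4 : comp4 (c • u) = c • comp4 u := rfl
  simp only [calG, hcomp1, hcomp2, hcomp3, hcomp4, hat_smul, smul_neg, fromBlocks_smul, smul_zero]

/-- The matrix `𝒢(u)` bundled as a linear map in `u`. -/
def calGLinearMap : (I12 → ℝ) →ₗ[ℝ] Matrix I12 I12 ℝ where
  toFun := calG
  map_add' := calG_add
  map_smul' := calG_smul

/-- Quasi-dissipativity of the IGEB nonlinearity on bounded sets. -/
theorem stmt_5 (ℓ : ℝ) (hℓ : 0 < ℓ) (Q : ℝ → Matrix I12 I12 ℝ)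
    (hQcont : ContinuousOn Q (Set.Icc 0 ℓ))
    (hQpos : ∀ x ∈ Set.Icc (0 : ℝ) ℓ, (Q x).PosDef) :
    ∀ α > (0 : ℝ), ∃ ω : ℝ, ∀ φ ψ : ℝ → (I12 → ℝ),
      ContinuousOn φ (Set.Icc 0 ℓ) → ContinuousOn ψ (Set.Icc 0 ℓ) →
      (∀ x ∈ Set.Icc (0 : ℝ) ℓ, Real.sqrt (φ x ⬝ᵥ φ x) ≤ α) →
      (∀ x ∈ Set.Icc (0 : ℝ) ℓ, Real.sqrt (ψ x ⬝ᵥ ψ x) ≤ α) →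
      (∫ x in (0 : ℝ)..ℓ,
          (gbar Q x (φ x) - gbar Q x (ψ x)) ⬝ᵥ (Q x *ᵥ (φ x - ψ x)))
        ≤ ω * ∫ x in (0 : ℝ)..ℓ, (φ x - ψ x) ⬝ᵥ (Q x *ᵥ (φ x - ψ x)) := by
  intro α _
  obtain ⟨ω, hω⟩ := stmt_5_general (X := ℝ) calGLinearMap
    (isCompact_Icc.image_of_continuousOn hQcont) (Set.forall_mem_image.2 hQpos)
    (isBounded_setOf_sqrt_dotProduct_self_le α)
  refine ⟨ω, fun φ ψ hφ hψ hφα hψα => ?_⟩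
  have ae_of_Icc {p : ℝ → Prop} (h : ∀ x ∈ Set.Icc 0 ℓ, p x) :
      ∀ᵐ x ∂volume.restrict (Set.Icc 0 ℓ), p x := ae_restrict_of_forall_mem measurableSet_Icc h
  have hQ_meas : AEStronglyMeasurable Q (volume.restrict (Set.Icc 0 ℓ)) :=
    ContinuousOn.aestronglyMeasurable (β := I12 → I12 → ℝ) hQcont measurableSet_Icc
  simp only [intervalIntegral.integral_of_le hℓ.le, ← integral_Icc_eq_integral_Ioc]
  exact hω _ Q φ ψ hQ_meas
    (hφ.aestronglyMeasurable measurableSet_Icc) (hψ.aestronglyMeasurable measurableSet_Icc)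
    (ae_of_Icc fun _ => Set.mem_image_of_mem Q) (ae_of_Icc hφα) (ae_of_Icc hψα)
end

section
/- Let η > 0 and ℓ > 0 be fixed. For any choice of real constants 0 ≤ a < b, there exists an infinitely differentiable function q : ℝ → ℝ such that q(0) = a, q(ℓ) = b, and q'(x) > (q(x) − q(0)) · η for all x ∈ [0, ℓ]. -/
open scoped ContDiff

/-- The explicit weight `q(x) = a + e^{-η(ℓ - x)} (x / ℓ) (b - a)`, interpolating between `a` at `0`
and `b` at `ℓ`. It is chosen so that `(q(x) - a) e^{-ηx}` is linear in `x`: multiplying by this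
integrating factor turns `q' > η (q - a)` into the positivity of a slope. For `ℓ = 0` it is the
constant `a`, since then `x / ℓ = 0`. -/
noncomputable def expWeight (η ℓ a b x : ℝ) : ℝ :=
  a + Real.exp (-η * (ℓ - x)) * (x / ℓ) * (b - a)

section expWeight

variable (η ℓ a b : ℝ)

theorem expWeight_zero : expWeight η ℓ a b 0 = a := by
  simp [expWeight]

theorem expWeight_self {ℓ : ℝ} (hℓ : ℓ ≠ 0) : expWeight η ℓ a b ℓ = b := by
  simp [expWeight, hℓ]

theorem contDiff_expWeight {n : ℕ∞ω} : ContDiff ℝ n (expWeight η ℓ a b) := by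
  unfold expWeight
  fun_prop

theorem hasDerivAt_expWeight (x : ℝ) :
    HasDerivAt (expWeight η ℓ a b)
      ((expWeight η ℓ a b x - a) * η + Real.exp (-η * (ℓ - x)) * ((b - a) / ℓ)) x := by
  have hexp : HasDerivAt (fun y ↦ Real.exp (-η * (ℓ - y))) (Real.exp (-η * (ℓ - x)) * η) x := by
    simpa using (((hasDerivAt_id x).const_sub ℓ).const_mul (-η)).exp
  have hlin : HasDerivAt (fun y ↦ y / ℓ) (1 / ℓ) x := (hasDerivAt_id x).div_const ℓ
  refine (((hexp.mul hlin).mul_const (b - a)).const_add a).congr_deriv ?_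
  rw [expWeight]
  ring

theorem lt_deriv_expWeight {ℓ a b : ℝ} (hslope : 0 < (b - a) / ℓ) (x : ℝ) :
    (expWeight η ℓ a b x - a) * η < deriv (expWeight η ℓ a b) x := by
  rw [(hasDerivAt_expWeight η ℓ a b x).deriv]
  exact lt_add_of_pos_right _ (mul_pos (Real.exp_pos _) hslope)

end expWeight

theorem stmt_7_general (η : ℝ) {ℓ a b : ℝ} (hslope : 0 < (b - a) / ℓ) :
    ∃ q : ℝ → ℝ, ContDiff ℝ ω q ∧ q 0 = a ∧ q ℓ = b ∧
      ∀ x, (q x - q 0) * η < deriv q x := by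
  have hℓ : ℓ ≠ 0 := (div_ne_zero_iff.1 hslope.ne').2
  refine ⟨expWeight η ℓ a b, contDiff_expWeight η ℓ a b, expWeight_zero η ℓ a b,
    expWeight_self η a b hℓ, fun x ↦ ?_⟩
  rw [expWeight_zero]
  exact lt_deriv_expWeight η hslope x

/-- Existence of smooth weight functions (part b)): for `0 ≤ a < b` there is a smooth
`q` with `q 0 = a`, `q ℓ = b` and `q'(x) > (q(x) − q(0)) η` on `[0, ℓ]`. -/
theorem stmt_7 (η ℓ : ℝ) (hη : 0 < η) (hℓ : 0 < ℓ)
    (a b : ℝ) (ha : 0 ≤ a) (hab : a < b) :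
    ∃ q : ℝ → ℝ, ContDiff ℝ (⊤ : ℕ∞) q ∧ q 0 = a ∧ q ℓ = b ∧
      ∀ x ∈ Set.Icc (0 : ℝ) ℓ, deriv q x > (q x - q 0) * η := by
  obtain ⟨q, hq, hq_zero, hq_ℓ, hq_deriv⟩ := stmt_7_general η (div_pos (sub_pos.2 hab) hℓ)
  exact ⟨q, hq.of_le le_top, hq_zero, hq_ℓ, fun x _ ↦ hq_deriv x⟩
end

section
/- Let ℓ > 0 and η > 0 be real numbers and let n be a positive integer such that 2ηℓ < n. Define the polynomial function p_n⁻ : ℝ → ℝ by p_n⁻(x) = −(1/2 − (η/n) x)ⁿ. Then p_n⁻'(x) > (p_n⁻(ℓ) − p_n⁻(x)) · η for all x ∈ (0, ℓ), and p_n⁻(ℓ) − p_n⁻(0) ≤ 1/2ⁿ. -/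
/-- The polynomial weight `p_n⁻(x) = −(1/2 − (η/n) x)ⁿ`. -/
noncomputable def pnMinus (η : ℝ) (n : ℕ) : ℝ → ℝ := fun x => -((1 / 2 - (η / n) * x) ^ n)

/-!
Write `a = 1/2 - (η/n) x`, so that `p_n⁻(x) = -aⁿ` has derivative `η aⁿ⁻¹` in `x`. Whenever
`0 < a < 1`, this derivative exceeds `η aⁿ = -η p_n⁻(x)`, and hence also
`η (p_n⁻(ℓ) - p_n⁻(x))`, because `p_n⁻(ℓ) < 0`. The same sign gives the second claim, since
`p_n⁻(0) = -1/2ⁿ`.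
-/

section PolynomialWeight

variable {η x : ℝ} {n : ℕ}

theorem half_sub_div_mul_pos (hn : 0 < n) (hx : 2 * η * x < n) : 0 < 1 / 2 - η / n * x := by
  have hn_real : (0 : ℝ) < n := Nat.cast_pos.mpr hn
  rw [sub_pos, div_mul_eq_mul_div, div_lt_iff₀ hn_real]
  linarith

theorem half_sub_div_mul_lt_one (hn : 0 < n) (hx : -(n : ℝ) < 2 * η * x) :
    1 / 2 - η / n * x < 1 := by
  have reflected_pos : 0 < 1 / 2 - η / n * -x := half_sub_div_mul_pos hn (by linarith)
  linarith

theorem pnMinus_apply_zero (η : ℝ) (n : ℕ) : pnMinus η n 0 = -(1 / 2 ^ n) := by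
  simp [pnMinus]

theorem pnMinus_lt_zero (hn : 0 < n) (hx : 2 * η * x < n) : pnMinus η n x < 0 :=
  neg_neg_of_pos (pow_pos (half_sub_div_mul_pos hn hx) n)

theorem hasDerivAt_pnMinus (η x : ℝ) (hn : 0 < n) :
    HasDerivAt (pnMinus η n) (η * (1 / 2 - η / n * x) ^ (n - 1)) x := by
  have base_deriv : HasDerivAt (fun y : ℝ => 1 / 2 - η / n * y) (-(η / n)) x := by
    simpa only [id, mul_one] using ((hasDerivAt_id x).const_mul (η / n)).const_sub (1 / 2)
  refine (base_deriv.pow n).neg.congr_deriv ?_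
  field_simp

theorem neg_pnMinus_mul_lt_deriv (hη : 0 < η) (hn : 0 < n) (hx_lower : -(n : ℝ) < 2 * η * x)
    (hx_upper : 2 * η * x < n) : -pnMinus η n x * η < deriv (pnMinus η n) x := by
  have pow_lt : (1 / 2 - η / n * x) ^ n < (1 / 2 - η / n * x) ^ (n - 1) :=
    pow_lt_pow_right_of_lt_one₀ (half_sub_div_mul_pos hn hx_upper)
      (half_sub_div_mul_lt_one hn hx_lower) (Nat.sub_one_lt_of_lt hn)
  calc -pnMinus η n x * η = η * (1 / 2 - η / n * x) ^ n := by rw [pnMinus, neg_neg, mul_comm]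
    _ < η * (1 / 2 - η / n * x) ^ (n - 1) := mul_lt_mul_of_pos_left pow_lt hη
    _ = deriv (pnMinus η n) x := (hasDerivAt_pnMinus η x hn).deriv.symm

end PolynomialWeight

/-- Properties of the polynomial weight `p_n⁻` when `2ηℓ < n`. -/
theorem stmt_8 (ℓ η : ℝ) (hℓ : 0 < ℓ) (hη : 0 < η) (n : ℕ) (hn : 0 < n)
    (h2 : 2 * η * ℓ < n) :
    (∀ x ∈ Set.Ioo (0 : ℝ) ℓ,
        deriv (pnMinus η n) x > (pnMinus η n ℓ - pnMinus η n x) * η) ∧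
      pnMinus η n ℓ - pnMinus η n 0 ≤ 1 / 2 ^ n := by
  have weight_neg : pnMinus η n ℓ < 0 := pnMinus_lt_zero hn h2
  refine ⟨fun x ⟨hx_pos, hx_lt⟩ => ?_, ?_⟩
  · have hx_lower : -(n : ℝ) < 2 * η * x :=
      (neg_nonpos.mpr n.cast_nonneg).trans_lt (by positivity)
    have hx_upper : 2 * η * x < n := lt_trans (by gcongr) h2
    calc (pnMinus η n ℓ - pnMinus η n x) * η
      _ < -pnMinus η n x * η := mul_lt_mul_of_pos_right (by linarith) hη
      _ < deriv (pnMinus η n) x := neg_pnMinus_mul_lt_deriv hη hn hx_lower hx_upper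
  · rw [pnMinus_apply_zero]
    linarith
end

section
/- Let ℓ > 0 and η > 0 be real numbers and let n be a positive integer such that 2ηℓ < n. Define the polynomial function p_n⁺ : ℝ → ℝ by p_n⁺(x) = 1/2ⁿ + (1/2 + (η/n)(x − ℓ))ⁿ. Then p_n⁺'(x) > (p_n⁺(x) − p_n⁺(0)) · η for all x ∈ (0, ℓ), and p_n⁺(ℓ) − p_n⁺(0) ≤ 1/2ⁿ. -/
/-- The polynomial weight `p_n⁺(x) = 1/2ⁿ + (1/2 + (η/n)(x − ℓ))ⁿ`. -/
noncomputable def pnPlus (η ℓ : ℝ) (n : ℕ) : ℝ → ℝ :=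
  fun x => 1 / 2 ^ n + (1 / 2 + (η / n) * (x - ℓ)) ^ n

/-!
Write `p_n⁺ = 1/2ⁿ + qⁿ` with `q` affine of slope `η / n`, so that `p_n⁺' = η qⁿ⁻¹`. Where
`0 < q < 1` this exceeds `η qⁿ = η (p_n⁺ - 1/2ⁿ)`, and `1/2ⁿ ≤ p_n⁺(0)` because `q(0) ≥ 0`. The
second inequality is the same lower bound at `0`, since `p_n⁺(ℓ) = 1/2ⁿ + 1/2ⁿ`.
-/

/-- The affine function `1/2 + (η/n)(x − ℓ)` whose `n`-th power is the non-constant part of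
`p_n⁺`. For `n = 0` the quotient `η / n` is `0`. -/
noncomputable def pnPlusBase (η ℓ : ℝ) (n : ℕ) (x : ℝ) : ℝ :=
  1 / 2 + (η / n) * (x - ℓ)

section

variable {η ℓ x : ℝ} {n : ℕ}

lemma pnPlus_eq_add_pnPlusBase_pow (η ℓ : ℝ) (n : ℕ) (x : ℝ) :
    pnPlus η ℓ n x = 1 / 2 ^ n + pnPlusBase η ℓ n x ^ n :=
  rfl

lemma pnPlusBase_eq_div (hn : 0 < n) :
    pnPlusBase η ℓ n x = (n + 2 * η * (x - ℓ)) / (2 * n) := by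
  unfold pnPlusBase
  field_simp

lemma pnPlusBase_nonneg (hn : 0 < n) (hx : 2 * η * (ℓ - x) ≤ n) :
    0 ≤ pnPlusBase η ℓ n x := by
  rw [pnPlusBase_eq_div hn]
  exact div_nonneg (by linarith) (by positivity)

lemma pnPlusBase_mem_Ioo (hx : |2 * η * (x - ℓ)| < n) :
    pnPlusBase η ℓ n x ∈ Set.Ioo 0 1 := by
  have hn : 0 < n := Nat.cast_pos.mp ((abs_nonneg _).trans_lt hx)
  obtain ⟨lower, upper⟩ := abs_lt.mp hx
  have h2n : (0 : ℝ) < 2 * n := by positivity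
  rw [pnPlusBase_eq_div hn]
  exact ⟨div_pos (by linarith) h2n, (div_lt_one h2n).mpr (by linarith)⟩

lemma hasDerivAt_pnPlusBase (η ℓ : ℝ) (n : ℕ) (x : ℝ) :
    HasDerivAt (pnPlusBase η ℓ n) (η / n) x := by
  have h := (((hasDerivAt_id x).sub_const ℓ).const_mul (η / n)).const_add (1 / 2)
  rwa [mul_one] at h

lemma hasDerivAt_pnPlus (hn : 0 < n) (η ℓ x : ℝ) :
    HasDerivAt (pnPlus η ℓ n) (pnPlusBase η ℓ n x ^ (n - 1) * η) x := by
  have slope : n * pnPlusBase η ℓ n x ^ (n - 1) * (η / n) = pnPlusBase η ℓ n x ^ (n - 1) * η := by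
    rw [mul_right_comm, mul_div_cancel₀ η (by positivity : (n : ℝ) ≠ 0), mul_comm]
  rw [← slope]
  exact ((hasDerivAt_pnPlusBase η ℓ n x).pow n).const_add (1 / 2 ^ n)

lemma one_div_two_pow_le_pnPlus (hn : 0 < n) (hx : 2 * η * (ℓ - x) ≤ n) :
    1 / 2 ^ n ≤ pnPlus η ℓ n x :=
  le_add_of_nonneg_right (pow_nonneg (pnPlusBase_nonneg hn hx) n)

lemma pnPlus_self (η ℓ : ℝ) (n : ℕ) : pnPlus η ℓ n ℓ = 1 / 2 ^ n + 1 / 2 ^ n := by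
  simp [pnPlus]

lemma pnPlus_sub_mul_lt_deriv (hη : 0 < η) (hx : |2 * η * (x - ℓ)| < n) :
    (pnPlus η ℓ n x - 1 / 2 ^ n) * η < deriv (pnPlus η ℓ n) x := by
  have hn : 0 < n := Nat.cast_pos.mp ((abs_nonneg _).trans_lt hx)
  obtain ⟨base_pos, base_lt_one⟩ := pnPlusBase_mem_Ioo hx
  rw [(hasDerivAt_pnPlus hn η ℓ x).deriv, pnPlus_eq_add_pnPlusBase_pow, add_sub_cancel_left]
  exact mul_lt_mul_of_pos_right
    (pow_lt_pow_right_of_lt_one₀ base_pos base_lt_one (Nat.sub_one_lt_of_lt hn)) hη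

end

theorem stmt_9_general (ℓ η : ℝ) (hη : 0 < η) (n : ℕ) (hn : 0 < n) (h2 : 2 * η * ℓ ≤ n) :
    (∀ x, |2 * η * (x - ℓ)| < n →
        deriv (pnPlus η ℓ n) x > (pnPlus η ℓ n x - pnPlus η ℓ n 0) * η) ∧
      pnPlus η ℓ n ℓ - pnPlus η ℓ n 0 ≤ 1 / 2 ^ n := by
  have weight_zero_ge : 1 / 2 ^ n ≤ pnPlus η ℓ n 0 :=
    one_div_two_pow_le_pnPlus hn (by rwa [sub_zero])
  refine ⟨fun x hx => ?_, by linarith [pnPlus_self η ℓ n]⟩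
  calc (pnPlus η ℓ n x - pnPlus η ℓ n 0) * η
      ≤ (pnPlus η ℓ n x - 1 / 2 ^ n) * η := by gcongr
    _ < deriv (pnPlus η ℓ n) x := pnPlus_sub_mul_lt_deriv hη hx

/-- Properties of the polynomial weight `p_n⁺` when `2ηℓ < n`. -/
theorem stmt_9 (ℓ η : ℝ) (hℓ : 0 < ℓ) (hη : 0 < η) (n : ℕ) (hn : 0 < n)
    (h2 : 2 * η * ℓ < n) :
    (∀ x ∈ Set.Ioo (0 : ℝ) ℓ,
        deriv (pnPlus η ℓ n) x > (pnPlus η ℓ n x - pnPlus η ℓ n 0) * η) ∧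
      pnPlus η ℓ n ℓ - pnPlus η ℓ n 0 ≤ 1 / 2 ^ n := by
  refine (stmt_9_general ℓ η hη n hn h2.le).imp_left fun deriv_gt x ⟨hx0, hxℓ⟩ => deriv_gt x ?_
  exact abs_lt.mpr ⟨by nlinarith, by nlinarith⟩
end

section
/- Let ℓ > 0, T > 0 and n ≥ 1, and let A, B : [0, ℓ] × [0, T] → ℝ^{n×n} be continuously differentiable functions such that the compatibility condition A(x,t) B(x,t) − B(x,t) A(x,t) + (∂ₓ A)(x,t) − (∂ₜ B)(x,t) = 0 holds for all (x,t) ∈ (0, ℓ) × (0, T). Then for every y_in ∈ ℝⁿ there exists exactly one continuously differentiable function y : [0, ℓ] × [0, T] → ℝⁿ satisfying ∂ₜ y(x,t) = A(x,t) y(x,t) and ∂ₓ y(x,t) = B(x,t) y(x,t) for all (x,t) ∈ (0, ℓ) × (0, T), together with y(0, 0) = y_in. -/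
open Matrix

attribute [local instance] Matrix.normedAddCommGroup Matrix.normedSpace

/-- The property of being a C¹ solution on `[0,ℓ] × [0,T]` of the overdetermined system
`∂ₜ y = A y`, `∂ₓ y = B y` on `(0,ℓ) × (0,T)` with `y(0,0) = y_in`. -/
def IsOverdetSol (ℓ T : ℝ) {n : ℕ} (A B : ℝ × ℝ → Matrix (Fin n) (Fin n) ℝ)
    (y_in : Fin n → ℝ) (y : ℝ × ℝ → (Fin n → ℝ)) : Prop :=
  ContDiffOn ℝ 1 y (Set.Icc 0 ℓ ×ˢ Set.Icc 0 T) ∧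
  (∀ p ∈ Set.Ioo (0 : ℝ) ℓ ×ˢ Set.Ioo (0 : ℝ) T,
      fderiv ℝ y p ((0 : ℝ), (1 : ℝ)) = A p *ᵥ y p ∧
      fderiv ℝ y p ((1 : ℝ), (0 : ℝ)) = B p *ᵥ y p) ∧
  y (0, 0) = y_in

/-!
Write the system as `dy = ω y` for the operator-valued 1-form `ω = B dx + A dt`; the compatibility
condition says that `ω` is flat. Along the segment from a base point `p₀` to `q` a solution must
satisfy the linear ODE `z' = ω(q - p₀) z`, which gives uniqueness and suggests `y q = z_q 1`,
where `z_q` is the solution starting at `y₀`. The derivative of `z_q` in `q` solves the variational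
equation along the segment. By flatness `t ↦ (h ↦ t • ω(h) z_q(t))` solves that equation too, with
the same initial value `0`, so at `t = 1` one reads off `dy = ω y`. On the boundary of the domain
both flatness and the system follow from their validity in the interior by continuity.
-/

open Set Filter Asymptotics Topology

section LinearODE

variable {E : Type*} [NormedAddCommGroup E] [NormedSpace ℝ E]

lemma isIntegralCurveOn_ite_Icc {v : ℝ → E → E} {z₁ z₂ : ℝ → E} {a b c : ℝ}
    (hab : a ≤ b) (hbc : b ≤ c) (hz₁ : IsIntegralCurveOn z₁ v (Icc a b))
    (hz₂ : IsIntegralCurveOn z₂ v (Icc b c)) (hb : z₂ b = z₁ b) :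
    IsIntegralCurveOn (fun t ↦ if t ≤ b then z₁ t else z₂ t) v (Icc a c) := by
  set z : ℝ → E := fun t ↦ if t ≤ b then z₁ t else z₂ t with hz
  have eqOn_left : EqOn z z₁ (Icc a b) := fun t ht ↦ if_pos ht.2
  have eqOn_right : EqOn z z₂ (Icc b c) := fun t ht ↦ by
    rcases ht.1.eq_or_lt with rfl | hlt
    · simp only [hz, le_refl, if_true, hb]
    · exact if_neg hlt.not_ge
  have left (t : ℝ) : HasDerivWithinAt z (v t (z t)) (Icc a b) t := by
    by_cases ht : t ∈ Icc a b
    · rw [eqOn_left ht]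
      exact (hz₁ t ht).congr_of_mem eqOn_left ht
    · exact HasFDerivWithinAt.of_notMem_closure (by rwa [isClosed_Icc.closure_eq])
  have right (t : ℝ) : HasDerivWithinAt z (v t (z t)) (Icc b c) t := by
    by_cases ht : t ∈ Icc b c
    · rw [eqOn_right ht]
      exact (hz₂ t ht).congr_of_mem eqOn_right ht
    · exact HasFDerivWithinAt.of_notMem_closure (by rwa [isClosed_Icc.closure_eq])
  intro t _
  rw [← Icc_union_Icc_eq_Icc hab hbc]
  exact (left t).union (right t)

variable {A : ℝ → E →L[ℝ] E} {a b M : ℝ}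

lemma exists_isIntegralCurveOn_clm_of_mul_sub_le_half [CompleteSpace E]
    (hA : ContinuousOn A (Icc a b)) (hM : ∀ t ∈ Icc a b, ‖A t‖ ≤ M) (hab : a ≤ b)
    (hshort : M * (b - a) ≤ 1 / 2) (z₀ : E) :
    ∃ z : ℝ → E, z a = z₀ ∧ IsIntegralCurveOn z (fun t ↦ A t) (Icc a b) := by
  have hM₀ : 0 ≤ M := (norm_nonneg _).trans (hM a (left_mem_Icc.2 hab))
  lift M to NNReal using hM₀
  have picard : IsPicardLindelof (fun t ↦ ⇑(A t)) (⟨a, left_mem_Icc.2 hab⟩ : Icc a b) z₀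
      ‖z₀‖₊ 0 (M * (2 * ‖z₀‖₊)) M :=
    { lipschitzOnWith t ht :=
        ((A t).lipschitzWith_of_opNorm_le (hM t ht)).lipschitzOnWith
      continuousOn z _ := hA.clm_apply continuousOn_const
      norm_le t ht z hz := by
        have hz' : ‖z‖ ≤ 2 * ‖z₀‖ := by
          have := norm_le_norm_add_norm_sub z₀ z
          rw [norm_sub_rev, ← dist_eq_norm] at this
          have := Metric.mem_closedBall.1 hz
          rw [coe_nnnorm] at this
          linarith
        exact (A t).le_of_opNorm_le_of_le (hM t ht) hz'
      mul_max_le := by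
        simp only [sub_self, NNReal.coe_mul, NNReal.coe_ofNat, coe_nnnorm, NNReal.coe_zero,
          sub_zero, max_eq_left (sub_nonneg.2 hab)]
        nlinarith [norm_nonneg z₀] }
  exact picard.exists_eq_forall_mem_Icc_hasDerivWithinAt₀

lemma exists_isIntegralCurveOn_clm [CompleteSpace E] (hab : a ≤ b)
    (hA : ContinuousOn A (Icc a b)) (z₀ : E) :
    ∃ z : ℝ → E, z a = z₀ ∧ IsIntegralCurveOn z (fun t ↦ A t) (Icc a b) := by
  obtain ⟨M, hM⟩ := isCompact_Icc.exists_bound_of_continuousOn hA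
  obtain ⟨N, hN⟩ := pow_unbounded_of_one_lt (2 * (M * (b - a))) one_lt_two
  replace hN : M * (b - a) ≤ 2 ^ N / 2 := by linarith
  induction N generalizing a b z₀ with
  | zero => exact exists_isIntegralCurveOn_clm_of_mul_sub_le_half hA hM hab (by simpa using hN) z₀
  | succ N ih =>
    have hleft : a ≤ midpoint ℝ a b := left_le_midpoint.2 hab
    have hright : midpoint ℝ a b ≤ b := midpoint_le_right.2 hab
    have hsub_left : Icc a (midpoint ℝ a b) ⊆ Icc a b := Icc_subset_Icc_right hright
    have hsub_right : Icc (midpoint ℝ a b) b ⊆ Icc a b := Icc_subset_Icc_left hleft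
    obtain ⟨z₁, hz₁a, hz₁⟩ := ih hleft (hA.mono hsub_left) z₀ (fun t ht ↦ hM t (hsub_left ht))
      (by rw [midpoint_sub_left, smul_eq_mul, invOf_eq_inv]; rw [pow_succ] at hN; linarith)
    obtain ⟨z₂, hz₂m, hz₂⟩ := ih hright (hA.mono hsub_right) (z₁ (midpoint ℝ a b))
      (fun t ht ↦ hM t (hsub_right ht))
      (by rw [right_sub_midpoint, smul_eq_mul, invOf_eq_inv]; rw [pow_succ] at hN; linarith)
    exact ⟨_, by rw [if_pos hleft, hz₁a],
      isIntegralCurveOn_ite_Icc hleft hright hz₁ hz₂ hz₂m⟩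

lemma eqOn_of_isIntegralCurveOn_clm {z w : ℝ → E} (hA : ContinuousOn A (Icc a b))
    (hz : IsIntegralCurveOn z (fun t ↦ A t) (Icc a b))
    (hw : IsIntegralCurveOn w (fun t ↦ A t) (Icc a b)) (h : z a = w a) :
    EqOn z w (Icc a b) := by
  obtain ⟨M, hM⟩ := isCompact_Icc.exists_bound_of_continuousOn hA
  refine ODE_solution_unique_of_mem_Icc_right (s := fun _ ↦ univ) (K := M.toNNReal)
    (fun t ht ↦ ((A t).lipschitzWith_of_opNorm_le ?_).lipschitzOnWith)
    hz.continuousOn (fun t ht ↦ ?_) (fun _ _ ↦ mem_univ _)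
    hw.continuousOn (fun t ht ↦ ?_) (fun _ _ ↦ mem_univ _) h
  · exact (hM t (Ico_subset_Icc_self ht)).trans (Real.le_coe_toNNReal M)
  · exact (hz t (Ico_subset_Icc_self ht)).mono_of_mem_nhdsWithin (Icc_mem_nhdsGE_of_mem ht)
  · exact (hw t (Ico_subset_Icc_self ht)).mono_of_mem_nhdsWithin (Icc_mem_nhdsGE_of_mem ht)

end LinearODE

section UniformInParameter

variable {P T F : Type*} [TopologicalSpace T] [NormedAddCommGroup F] {K : Set T}

lemma isLittleO_one_sub_of_continuousOn_prod [TopologicalSpace P] {s : Set P} {p : P}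
    {f : P → T → F} (hK : IsCompact K)
    (hf : ContinuousOn f.uncurry (s ×ˢ K)) (hp : p ∈ s) :
    (fun x : P × T ↦ f x.1 x.2 - f p x.2) =o[𝓝[s] p ×ˢ 𝓟 K] (fun _ ↦ (1 : ℝ)) := by
  refine isLittleO_iff.2 fun ε hε ↦ eventually_prod_principal_iff.2 ?_
  obtain ⟨v, hv, hclose⟩ := hK.mem_uniformity_of_prod hf hp (Metric.dist_mem_uniformity hε)
  filter_upwards [hv] with q hq t ht
  have : ‖f q t - f p t‖ < ε := dist_eq_norm (f q t) (f p t) ▸ hclose q hq t ht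
  simpa using this.le

lemma eventually_norm_le_of_continuousOn_prod [TopologicalSpace P] {s : Set P} {p : P}
    {f : P → T → F} (hK : IsCompact K) (hf : ContinuousOn f.uncurry (s ×ˢ K)) (hp : p ∈ s) :
    ∃ M, ∀ᶠ q in 𝓝[s] p, ∀ t ∈ K, ‖f q t‖ ≤ M := by
  have hfp : ContinuousOn (f p) K :=
    hf.comp (f := fun t ↦ (p, t)) (by fun_prop) fun t ht ↦ ⟨hp, ht⟩
  obtain ⟨M, hM⟩ := hK.exists_bound_of_continuousOn hfp
  have hsub := (isLittleO_one_sub_of_continuousOn_prod hK hf hp).bound one_pos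
  refine ⟨M + 1, ?_⟩
  filter_upwards [eventually_prod_principal_iff.1 hsub] with q hq t ht
  calc ‖f q t‖ ≤ ‖f p t‖ + ‖f q t - f p t‖ := norm_le_norm_add_norm_sub' _ _
    _ ≤ M + 1 := add_le_add (hM t ht) (by simpa using hq t ht)

variable [NormedAddCommGroup P] [NormedSpace ℝ P] [NormedSpace ℝ F] {s : Set P} {p : P}

lemma isLittleO_sub_sub_fderiv_of_continuousOn_prod {f : P → T → F} {f' : P → T → P →L[ℝ] F}
    (hs : Convex ℝ s) (hK : IsCompact K)
    (hf : ∀ t ∈ K, ∀ q ∈ s, HasFDerivWithinAt (f · t) (f' q t) s q)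
    (hf' : ContinuousOn f'.uncurry (s ×ˢ K)) (hp : p ∈ s) :
    (fun x : P × T ↦ f x.1 x.2 - f p x.2 - f' p x.2 (x.1 - p))
      =o[𝓝[s] p ×ˢ 𝓟 K] (fun x ↦ x.1 - p) := by
  refine isLittleO_iff.2 fun ε hε ↦ eventually_prod_principal_iff.2 ?_
  have hclose := (isLittleO_one_sub_of_continuousOn_prod hK hf' hp).bound hε
  obtain ⟨r, hr, hball⟩ := Metric.mem_nhdsWithin_iff.1 (eventually_prod_principal_iff.1 hclose)
  filter_upwards [inter_mem_nhdsWithin s (Metric.ball_mem_nhds p hr)] with q hq t ht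
  have hconvex : Convex ℝ (s ∩ Metric.ball p r) := hs.inter (convex_ball p r)
  exact hconvex.norm_image_sub_le_of_norm_hasFDerivWithin_le' (f := (f · t)) (f' := (f' · t))
    (fun x hx ↦ (hf t ht x hx.1).mono inter_subset_left)
    (fun x hx ↦ by simpa using hball hx.symm t ht) ⟨hp, Metric.mem_ball_self hr⟩ hq

end UniformInParameter

section DependenceOnParameter

variable {E : Type*} [NormedAddCommGroup E] [NormedSpace ℝ E] {a b : ℝ}

lemma gronwallBound_zero_eq_mul (K ε x : ℝ) :
    gronwallBound 0 K ε x = gronwallBound 0 K 1 x * ε := by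
  unfold gronwallBound
  split_ifs <;> ring

lemma isLittleO_of_norm_hasDerivWithinAt_le {Q G : Type*} [NormedAddCommGroup G] {l : Filter Q}
    {r r' f : Q → ℝ → E} {g : Q → G} {K : ℝ}
    (hr : ∀ᶠ q in l, ∀ t ∈ Icc a b, HasDerivWithinAt (r q) (r' q t) (Icc a b) t)
    (hinit : ∀ᶠ q in l, r q a = 0)
    (hbound : ∀ᶠ q in l, ∀ t ∈ Icc a b, ‖r' q t‖ ≤ K * ‖r q t‖ + ‖f q t‖)
    (hf : (fun x : Q × ℝ ↦ f x.1 x.2) =o[l ×ˢ 𝓟 (Icc a b)] (fun x ↦ g x.1))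
    {t : ℝ} (ht : t ∈ Icc a b) :
    (r · t) =o[l] g := by
  set C := gronwallBound 0 K 1 (t - a)
  refine isLittleO_iff.2 fun c hc ↦ ?_
  have hε : 0 < c / (|C| + 1) := by positivity
  filter_upwards [hr, hinit, hbound, eventually_prod_principal_iff.1 (hf.bound hε)]
    with q hr hinit hbound hf
  have gronwall : ‖r q t‖ ≤ gronwallBound 0 K (c / (|C| + 1) * ‖g q‖) (t - a) := by
    refine norm_le_gronwallBound_of_norm_deriv_right_le (fun t ht ↦ (hr t ht).continuousWithinAt)
      (fun t ht ↦ (hr t (Ico_subset_Icc_self ht)).mono_of_mem_nhdsWithin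
        (Icc_mem_nhdsGE_of_mem ht)) (by simp [hinit]) (fun t ht ↦ ?_) t ht
    have ht := Ico_subset_Icc_self ht
    exact (hbound t ht).trans (by gcongr; exact hf t ht)
  calc ‖r q t‖ ≤ C * (c / (|C| + 1) * ‖g q‖) := by rwa [gronwallBound_zero_eq_mul] at gronwall
    _ ≤ (|C| + 1) * (c / (|C| + 1) * ‖g q‖) := by
      gcongr
      exact (le_abs_self C).trans (le_add_of_nonneg_right zero_le_one)
    _ = c * ‖g q‖ := by field_simp

lemma isBigO_norm_mul_norm_clm_apply {X P : Type*} [NormedAddCommGroup P] [NormedSpace ℝ P]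
    {l : Filter X} (c : X → P →L[ℝ] E) (u : X → P) :
    (fun x ↦ c x (u x)) =O[l] (fun x ↦ ‖c x‖ * ‖u x‖) :=
  isBigO_of_le _ fun x ↦ by simpa using (c x).le_opNorm (u x)

variable {P : Type*} [NormedAddCommGroup P] [NormedSpace ℝ P] {s : Set P} {p : P}
  {A : P → ℝ → E →L[ℝ] E} {A' : ℝ → P →L[ℝ] E →L[ℝ] E} {z : P → ℝ → E} {ζ : ℝ → P →L[ℝ] E}

/-- The function estimated here is the inhomogeneity in the linear ODE satisfied by the remainder
`z q - z p - ζ (q - p)`, where `w = z p`. -/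
lemma isLittleO_variation_forcing {w : ℝ → E} (hp : p ∈ s)
    (hA : ContinuousOn A.uncurry (s ×ˢ Icc a b))
    (hA' : (fun x : P × ℝ ↦ A x.1 x.2 - A p x.2 - A' x.2 (x.1 - p))
      =o[𝓝[s] p ×ˢ 𝓟 (Icc a b)] (fun x ↦ x.1 - p))
    (hw : ContinuousOn w (Icc a b)) (hζ : ContinuousOn ζ (Icc a b)) :
    (fun x : P × ℝ ↦ (A x.1 x.2 - A p x.2 - A' x.2 (x.1 - p)) (w x.2)
        + (A x.1 x.2 - A p x.2) (ζ x.2 (x.1 - p)))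
      =o[𝓝[s] p ×ˢ 𝓟 (Icc a b)] (fun x ↦ x.1 - p) := by
  have hw_one : (fun x : P × ℝ ↦ w x.2) =O[𝓝[s] p ×ˢ 𝓟 (Icc a b)] (fun _ ↦ (1 : ℝ)) :=
    (hw.isBigO_principal isCompact_Icc (by simp)).comp_tendsto tendsto_snd
  have hζ_one : (fun x : P × ℝ ↦ ζ x.2) =O[𝓝[s] p ×ˢ 𝓟 (Icc a b)] (fun _ ↦ (1 : ℝ)) :=
    (hζ.isBigO_principal isCompact_Icc (by simp)).comp_tendsto tendsto_snd
  have hζ_apply : (fun x : P × ℝ ↦ ζ x.2 (x.1 - p)) =O[𝓝[s] p ×ˢ 𝓟 (Icc a b)]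
      (fun x ↦ x.1 - p) :=
    ((isBigO_norm_mul_norm_clm_apply _ _).trans
      (hζ_one.norm_left.mul (isBigO_refl _ _).norm_norm)).trans (by simpa using isBigO_refl _ _)
  have hA_sub := isLittleO_one_sub_of_continuousOn_prod isCompact_Icc hA hp
  refine .add ?_ ?_
  · refine (isBigO_norm_mul_norm_clm_apply _ _).trans_isLittleO ?_
    simpa using hA'.norm_norm.mul_isBigO hw_one.norm_left
  · refine (isBigO_norm_mul_norm_clm_apply _ _).trans_isLittleO ?_
    simpa using hA_sub.norm_left.mul_isBigO hζ_apply.norm_norm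

lemma hasFDerivWithinAt_of_isIntegralCurveOn_clm {z₀ : E} (hp : p ∈ s)
    (hA : ContinuousOn A.uncurry (s ×ˢ Icc a b))
    (hA' : (fun x : P × ℝ ↦ A x.1 x.2 - A p x.2 - A' x.2 (x.1 - p))
      =o[𝓝[s] p ×ˢ 𝓟 (Icc a b)] (fun x ↦ x.1 - p))
    (hz : ∀ q ∈ s, IsIntegralCurveOn (z q) (fun t ↦ A q t) (Icc a b))
    (hz₀ : ∀ q ∈ s, z q a = z₀)
    (hζ : ∀ t ∈ Icc a b, HasDerivWithinAt ζ (A p t ∘L ζ t + (A' t).flip (z p t)) (Icc a b) t)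
    (hζ₀ : ζ a = 0) {t : ℝ} (ht : t ∈ Icc a b) :
    HasFDerivWithinAt (z · t) (ζ t) s p := by
  let forcing (q : P) (t : ℝ) : E :=
    (A q t - A p t - A' t (q - p)) (z p t) + (A q t - A p t) (ζ t (q - p))
  obtain ⟨M, hM⟩ := eventually_norm_le_of_continuousOn_prod isCompact_Icc hA hp
  refine .of_isLittleO <| isLittleO_of_norm_hasDerivWithinAt_le (K := M) (f := forcing)
    (r := fun q t ↦ z q t - z p t - ζ t (q - p)) (l := 𝓝[s] p) (a := a) (b := b)
    (r' := fun q t ↦ A q t (z q t - z p t - ζ t (q - p)) + forcing q t) ?_ ?_ ?_ ?_ ht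
  · filter_upwards [self_mem_nhdsWithin] with q hq t ht
    convert! ((hz q hq t ht).sub (hz p hp t ht)).sub
      ((hζ t ht).clm_apply (hasDerivWithinAt_const t _ (q - p))) using 1
    simp only [forcing, map_sub, map_zero, add_zero, _root_.sub_apply, _root_.add_apply,
      ContinuousLinearMap.comp_apply, ContinuousLinearMap.flip_apply]
    abel
  · filter_upwards [self_mem_nhdsWithin] with q hq
    simp [hz₀ q hq, hz₀ p hp, hζ₀]
  · filter_upwards [hM] with q hq t ht
    exact norm_add_le_of_le ((A q t).le_of_opNorm_le (hq t ht) _) le_rfl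
  · exact isLittleO_variation_forcing hp hA hA' (hz p hp).continuousOn
      fun t ht ↦ (hζ t ht).continuousWithinAt

end DependenceOnParameter

section FlatConnection

open AffineMap (lineMap)

variable {P E : Type*} [NormedAddCommGroup P] [NormedSpace ℝ P]
  [NormedAddCommGroup E] [NormedSpace ℝ E]
  {ω : P → P →L[ℝ] E →L[ℝ] E} {s : Set P} {p₀ p : P} {y y' : P → E}

/-- Flatness of the connection `d - ω`, where `ω` is a 1-form with values in the endomorphisms of
`E`. Both sides are the second derivative `D²y (u, v)` of a solution of `dy = ω y`, computed in the
two possible orders; their difference is the curvature of the connection. -/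
def IsFlatOn (ω : P → P →L[ℝ] E →L[ℝ] E) (s : Set P) : Prop :=
  ∀ p ∈ s, ∀ u v, fderivWithin ℝ ω s p u v + ω p v ∘L ω p u
    = fderivWithin ℝ ω s p v u + ω p u ∘L ω p v

/-- Parallel sections of the connection `d - ω`, i.e. solutions of `dy = ω y` on `s`. The flip turns
`ω p` into the map `v ↦ (h ↦ ω p h v)`, and the derivative is taken within `s`. -/
def IsParallelOn (ω : P → P →L[ℝ] E →L[ℝ] E) (s : Set P) (y : P → E) : Prop :=
  ∀ p ∈ s, HasFDerivWithinAt y ((ω p).flip (y p)) s p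

/-- The coefficient at time `t` of the linear ODE to which `dy = ω y` restricts along the segment
`t ↦ lineMap p₀ q t`. -/
noncomputable def radialCoeff (ω : P → P →L[ℝ] E →L[ℝ] E) (p₀ q : P) (t : ℝ) : E →L[ℝ] E :=
  ω (lineMap p₀ q t) (q - p₀)

/-- The derivative of `radialCoeff ω p₀ q t` with respect to the endpoint `q ∈ s`. -/
noncomputable def radialCoeffDeriv (ω : P → P →L[ℝ] E →L[ℝ] E) (s : Set P) (p₀ q : P) (t : ℝ) :
    P →L[ℝ] E →L[ℝ] E :=
  ω (lineMap p₀ q t) + t • (fderivWithin ℝ ω s (lineMap p₀ q t)).flip (q - p₀)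

lemma mapsTo_lineMap_prod_Icc (hs : Convex ℝ s) (hp₀ : p₀ ∈ s) :
    MapsTo (fun x : P × ℝ ↦ lineMap p₀ x.1 x.2) (s ×ˢ Icc 0 1) s :=
  fun _ hx ↦ hs.lineMap_mem hp₀ hx.1 hx.2

lemma continuousOn_radialCoeff (hs : Convex ℝ s) (hp₀ : p₀ ∈ s) (hω : ContinuousOn ω s) :
    ContinuousOn (radialCoeff ω p₀).uncurry (s ×ˢ Icc 0 1) :=
  (hω.comp (by fun_prop) (mapsTo_lineMap_prod_Icc hs hp₀)).clm_apply (by fun_prop)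

lemma continuousOn_radialCoeff_right (hs : Convex ℝ s) (hp₀ : p₀ ∈ s) (hp : p ∈ s)
    (hω : ContinuousOn ω s) : ContinuousOn (radialCoeff ω p₀ p) (Icc 0 1) :=
  (continuousOn_radialCoeff hs hp₀ hω).comp (f := fun t ↦ (p, t)) (by fun_prop)
    fun _ ht ↦ ⟨hp, ht⟩

lemma continuousOn_radialCoeffDeriv (hs : Convex ℝ s) (hs' : UniqueDiffOn ℝ s) (hp₀ : p₀ ∈ s)
    (hω : ContDiffOn ℝ 1 ω s) :
    ContinuousOn (radialCoeffDeriv ω s p₀).uncurry (s ×ˢ Icc 0 1) := by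
  have hmaps := mapsTo_lineMap_prod_Icc hs hp₀
  have hω_line := hω.continuousOn.comp (by fun_prop) hmaps
  have hfderiv_line := (hω.continuousOn_fderivWithin hs' le_rfl).comp (by fun_prop) hmaps
  have hflip := (ContinuousLinearMap.flipₗᵢ ℝ P P (E →L[ℝ] E)).continuous.comp_continuousOn
    hfderiv_line
  exact hω_line.add (continuousOn_snd.smul (hflip.clm_apply (by fun_prop)))

lemma hasFDerivWithinAt_radialCoeff (hs : Convex ℝ s) (hp₀ : p₀ ∈ s)
    (hω : DifferentiableOn ℝ ω s) {t : ℝ} (ht : t ∈ Icc 0 1) (hp : p ∈ s) :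
    HasFDerivWithinAt (radialCoeff ω p₀ · t) (radialCoeffDeriv ω s p₀ p t) s p := by
  have hline : HasFDerivWithinAt (fun q ↦ lineMap p₀ q t)
      (t • ContinuousLinearMap.id ℝ P) s p := by
    simp only [AffineMap.lineMap_apply, vsub_eq_sub, vadd_eq_add]
    exact (((hasFDerivWithinAt_id p s).sub_const p₀).const_smul t).add_const p₀
  have hω_line := HasFDerivWithinAt.comp (g := ω) p
    (hω _ (hs.lineMap_mem hp₀ hp ht)).hasFDerivWithinAt hline
    fun q hq ↦ hs.lineMap_mem hp₀ hq ht
  convert! hω_line.clm_apply ((hasFDerivWithinAt_id p s).sub_const p₀) using 1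
  ext h e
  simp [radialCoeffDeriv]

lemma hasDerivWithinAt_comp_lineMap {F : Type*} [NormedAddCommGroup F] [NormedSpace ℝ F]
    {f : P → F} {f' : P →L[ℝ] F} (hs : Convex ℝ s) (hp₀ : p₀ ∈ s) (hp : p ∈ s)
    {t : ℝ} (hf : HasFDerivWithinAt f f' s (lineMap p₀ p t)) :
    HasDerivWithinAt (fun t ↦ f (lineMap p₀ p t)) (f' (p - p₀)) (Icc (0 : ℝ) 1) t :=
  hf.comp_hasDerivWithinAt t AffineMap.hasDerivWithinAt_lineMap
    fun _ ht ↦ hs.lineMap_mem hp₀ hp ht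

lemma hasDerivWithinAt_clm_flip {F : Type*} [NormedAddCommGroup F] [NormedSpace ℝ F]
    {c : ℝ → P →L[ℝ] E →L[ℝ] F} {c' : P →L[ℝ] E →L[ℝ] F} {I : Set ℝ} {t : ℝ}
    (hc : HasDerivWithinAt c c' I t) :
    HasDerivWithinAt (fun t ↦ (c t).flip) c'.flip I t := by
  have hflip := LinearIsometryEquiv.hasFDerivAt (𝕜 := ℝ) (E := P →L[ℝ] E →L[ℝ] F)
    (F := E →L[ℝ] P →L[ℝ] F) (ContinuousLinearMap.flipₗᵢ ℝ P E F) (x := c t)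
  exact hflip.comp_hasDerivWithinAt t hc

/-- The candidate for the derivative of `z` in the endpoint comes from `z t = y (lineMap p₀ p t)`,
which differentiates to `t • dy = t • ω y`. -/
lemma IsFlatOn.hasDerivWithinAt_radial_variation (hflat : IsFlatOn ω s) (hs : Convex ℝ s)
    (hω : DifferentiableOn ℝ ω s) (hp₀ : p₀ ∈ s) (hp : p ∈ s) {z : ℝ → E}
    (hz : IsIntegralCurveOn z (fun t ↦ radialCoeff ω p₀ p t) (Icc 0 1))
    {t : ℝ} (ht : t ∈ Icc 0 1) :
    HasDerivWithinAt (fun t ↦ t • (ω (lineMap p₀ p t)).flip (z t))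
      (radialCoeff ω p₀ p t ∘L (t • (ω (lineMap p₀ p t)).flip (z t))
        + (radialCoeffDeriv ω s p₀ p t).flip (z t)) (Icc 0 1) t := by
  set m := lineMap p₀ p t with hm
  have hmem : m ∈ s := hs.lineMap_mem hp₀ hp ht
  have hω_line := hasDerivWithinAt_comp_lineMap (f := ω) hs hp₀ hp
    (hω m hmem).hasFDerivWithinAt
  have hvar := (hasDerivWithinAt_clm_flip hω_line).clm_apply (hz t ht)
  convert! (hasDerivWithinAt_id t (Icc 0 1)).smul hvar using 1
  ext h
  have hcurv := congr($(hflat m hmem (p - p₀) h) (z t))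
  simp only [_root_.add_apply, ContinuousLinearMap.comp_apply] at hcurv
  simp only [radialCoeff, radialCoeffDeriv, ← hm, _root_.add_apply, _root_.smul_apply, id_eq,
    one_smul, ContinuousLinearMap.comp_apply, ContinuousLinearMap.flip_apply, map_smul, hcurv]
  module

lemma IsParallelOn.continuousOn (hy : IsParallelOn ω s y) : ContinuousOn y s :=
  fun p hp ↦ (hy p hp).continuousWithinAt

lemma IsParallelOn.mono {s' : Set P} (hy : IsParallelOn ω s y) (h : s' ⊆ s) :
    IsParallelOn ω s' y :=
  fun p hp ↦ (hy p (h hp)).mono h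

lemma continuousOn_clm_flip_apply (hω : ContinuousOn ω s) (hy : ContinuousOn y s) :
    ContinuousOn (fun p ↦ (ω p).flip (y p)) s :=
  ((ContinuousLinearMap.flipₗᵢ ℝ P E E).continuous.comp_continuousOn hω).clm_apply hy

lemma IsParallelOn.contDiffOn (hy : IsParallelOn ω s y) (hs : UniqueDiffOn ℝ s)
    (hω : ContinuousOn ω s) : ContDiffOn ℝ 1 y s := by
  rw [← zero_add 1, contDiffOn_succ_iff_hasFDerivWithinAt_of_uniqueDiffOn hs]
  exact ⟨by simp, _, contDiffOn_zero.2 (continuousOn_clm_flip_apply hω hy.continuousOn), hy⟩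

lemma IsParallelOn.isIntegralCurveOn_comp_lineMap (hy : IsParallelOn ω s y) (hs : Convex ℝ s)
    (hp₀ : p₀ ∈ s) (hp : p ∈ s) :
    IsIntegralCurveOn (fun t : ℝ ↦ y (lineMap p₀ p t)) (fun t ↦ radialCoeff ω p₀ p t)
      (Icc 0 1) :=
  fun _ ht ↦ hasDerivWithinAt_comp_lineMap hs hp₀ hp (hy _ (hs.lineMap_mem hp₀ hp ht))

lemma IsParallelOn.eqOn (hy : IsParallelOn ω s y) (hy' : IsParallelOn ω s y')
    (hs : Convex ℝ s) (hω : ContinuousOn ω s) (hp₀ : p₀ ∈ s) (h : y p₀ = y' p₀) :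
    EqOn y y' s := fun p hp ↦ by
  simpa using eqOn_of_isIntegralCurveOn_clm (continuousOn_radialCoeff_right hs hp₀ hp hω)
    (hy.isIntegralCurveOn_comp_lineMap hs hp₀ hp) (hy'.isIntegralCurveOn_comp_lineMap hs hp₀ hp)
    (by simpa using h) (right_mem_Icc.2 zero_le_one)

theorem IsFlatOn.exists_isParallelOn [CompleteSpace E] (hflat : IsFlatOn ω s) (hs : Convex ℝ s)
    (hs' : UniqueDiffOn ℝ s) (hω : ContDiffOn ℝ 1 ω s) (hp₀ : p₀ ∈ s) (y₀ : E) :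
    ∃ y, IsParallelOn ω s y ∧ y p₀ = y₀ := by
  have hdiff : DifferentiableOn ℝ ω s := hω.differentiableOn one_ne_zero
  have hradial (q : P) : ∃ z : ℝ → E, q ∈ s → z 0 = y₀ ∧
      IsIntegralCurveOn z (fun t ↦ radialCoeff ω p₀ q t) (Icc 0 1) := by
    by_cases hq : q ∈ s
    · obtain ⟨z, hz⟩ := exists_isIntegralCurveOn_clm zero_le_one
        (continuousOn_radialCoeff_right hs hp₀ hq hω.continuousOn) y₀
      exact ⟨z, fun _ ↦ hz⟩
    · exact ⟨0, fun h ↦ absurd h hq⟩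
  choose z hz using hradial
  refine ⟨fun q ↦ z q 1, fun p hp ↦ ?_, ?_⟩
  · have hA' := isLittleO_sub_sub_fderiv_of_continuousOn_prod hs isCompact_Icc
      (fun t ht q hq ↦ hasFDerivWithinAt_radialCoeff hs hp₀ hdiff ht hq)
      (continuousOn_radialCoeffDeriv hs hs' hp₀ hω) hp
    simpa using hasFDerivWithinAt_of_isIntegralCurveOn_clm hp
      (continuousOn_radialCoeff hs hp₀ hω.continuousOn) hA' (fun q hq ↦ (hz q hq).2)
      (fun q hq ↦ (hz q hq).1)
      (fun t ht ↦ hflat.hasDerivWithinAt_radial_variation hs hdiff hp₀ hp (hz p hp).2 ht)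
      (zero_smul ℝ _) (right_mem_Icc.2 zero_le_one)
  · have hconst : IsIntegralCurveOn (fun _ ↦ y₀) (fun t ↦ radialCoeff ω p₀ p₀ t) (Icc 0 1) :=
      fun t _ ↦ by simpa [radialCoeff] using hasDerivWithinAt_const t (Icc 0 1) y₀
    exact eqOn_of_isIntegralCurveOn_clm (continuousOn_radialCoeff_right hs hp₀ hp₀ hω.continuousOn)
      (hz p₀ hp₀).2 hconst (hz p₀ hp₀).1 (right_mem_Icc.2 zero_le_one)

lemma subset_closure_interior_of_convex (hs : Convex ℝ s) (hne : (interior s).Nonempty) :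
    s ⊆ closure (interior s) :=
  subset_closure.trans (hs.closure_interior_eq_closure_of_nonempty_interior hne).ge

lemma IsParallelOn.of_interior (hy : IsParallelOn ω (interior s) y) (hs : Convex ℝ s)
    (hne : (interior s).Nonempty) (hω : ContinuousOn ω s) (hy₁ : ContDiffOn ℝ 1 y s) :
    IsParallelOn ω s y := by
  have hs' : UniqueDiffOn ℝ s := uniqueDiffOn_convex hs hne
  have hint : EqOn (fderivWithin ℝ y s) (fun p ↦ (ω p).flip (y p)) (interior s) := fun p hp ↦ by
    rw [fderivWithin_of_mem_nhds (mem_interior_iff_mem_nhds.1 hp)]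
    exact ((hy p hp).hasFDerivAt (isOpen_interior.mem_nhds hp)).fderiv
  have hall := hint.of_subset_closure (hy₁.continuousOn_fderivWithin hs' le_rfl)
    (continuousOn_clm_flip_apply hω hy₁.continuousOn) interior_subset
    (subset_closure_interior_of_convex hs hne)
  intro p hp
  simpa only [hall hp] using (hy₁.differentiableOn one_ne_zero p hp).hasFDerivWithinAt

lemma IsFlatOn.of_interior (hflat : IsFlatOn ω (interior s)) (hs : Convex ℝ s)
    (hne : (interior s).Nonempty) (hω : ContDiffOn ℝ 1 ω s) : IsFlatOn ω s := by
  have hω₀ := hω.continuousOn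
  have hω₁ := hω.continuousOn_fderivWithin (uniqueDiffOn_convex hs hne) le_rfl
  suffices h : ∀ u v, EqOn (fun p ↦ fderivWithin ℝ ω s p u v + ω p v ∘L ω p u)
      (fun p ↦ fderivWithin ℝ ω s p v u + ω p u ∘L ω p v) s from fun p hp u v ↦ h u v hp
  intro u v
  have hcont (u v : P) : ContinuousOn (fun p ↦ fderivWithin ℝ ω s p u v + ω p v ∘L ω p u) s :=
    ((hω₁.clm_apply continuousOn_const).clm_apply continuousOn_const).add
      ((hω₀.clm_apply continuousOn_const).clm_comp (hω₀.clm_apply continuousOn_const))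
  refine EqOn.of_subset_closure (fun p hp ↦ ?_) (hcont u v) (hcont v u) interior_subset
    (subset_closure_interior_of_convex hs hne)
  have := hflat p hp u v
  rwa [fderivWithin_of_isOpen isOpen_interior hp,
    ← fderivWithin_of_mem_nhds (mem_interior_iff_mem_nhds.1 hp)] at this

end FlatConnection

section PlanarConnection

variable {E : Type*} [NormedAddCommGroup E] [NormedSpace ℝ E]
  {α β : ℝ × ℝ → E →L[ℝ] E} {s : Set (ℝ × ℝ)} {y : ℝ × ℝ → E}

/-- The 1-form `β dx + α dt` on the plane, where the coordinates of a point are `(x, t)`. -/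
noncomputable def planarForm (α β : ℝ × ℝ → E →L[ℝ] E) (p : ℝ × ℝ) : ℝ × ℝ →L[ℝ] E →L[ℝ] E :=
  (ContinuousLinearMap.fst ℝ ℝ ℝ).smulRight (β p) + (ContinuousLinearMap.snd ℝ ℝ ℝ).smulRight (α p)

lemma planarForm_apply (p v : ℝ × ℝ) : planarForm α β p v = v.1 • β p + v.2 • α p := rfl

lemma contDiffOn_planarForm {k : WithTop ℕ∞} (hα : ContDiffOn ℝ k α s) (hβ : ContDiffOn ℝ k β s) :
    ContDiffOn ℝ k (planarForm α β) s :=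
  (contDiffOn_const.smulRight hβ).add (contDiffOn_const.smulRight hα)

lemma clm_real_prod_apply {F : Type*} [NormedAddCommGroup F] [NormedSpace ℝ F]
    (L : ℝ × ℝ →L[ℝ] F) (v : ℝ × ℝ) : L v = v.1 • L (1, 0) + v.2 • L (0, 1) := by
  rw [← map_smul, ← map_smul, ← map_add]
  simp

lemma hasFDerivAt_const_smulRight {P G F : Type*} [NormedAddCommGroup P] [NormedSpace ℝ P]
    [NormedAddCommGroup G] [NormedSpace ℝ G] [NormedAddCommGroup F] [NormedSpace ℝ F]
    (L : P →L[ℝ] ℝ) {f : G → F} {f' : G →L[ℝ] F} {p : G} (hf : HasFDerivAt f f' p) :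
    HasFDerivAt (fun q ↦ L.smulRight (f q)) (ContinuousLinearMap.smulRightL ℝ P F L ∘L f') p :=
  (ContinuousLinearMap.smulRightL ℝ P F L).hasFDerivAt.comp p hf

lemma fderiv_planarForm_apply {p : ℝ × ℝ} (hα : DifferentiableAt ℝ α p)
    (hβ : DifferentiableAt ℝ β p) (u v : ℝ × ℝ) :
    fderiv ℝ (planarForm α β) p u v = v.1 • fderiv ℝ β p u + v.2 • fderiv ℝ α p u := by
  have hform : HasFDerivAt (planarForm α β) _ p :=
    (hasFDerivAt_const_smulRight (.fst ℝ ℝ ℝ) hβ.hasFDerivAt).add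
      (hasFDerivAt_const_smulRight (.snd ℝ ℝ ℝ) hα.hasFDerivAt)
  rw [hform.fderiv]
  rfl

lemma isFlatOn_planarForm (hs : IsOpen s) (hα : DifferentiableOn ℝ α s)
    (hβ : DifferentiableOn ℝ β s)
    (hcompat : ∀ p ∈ s,
      α p ∘L β p - β p ∘L α p + fderiv ℝ α p (1, 0) - fderiv ℝ β p (0, 1) = 0) :
    IsFlatOn (planarForm α β) s := by
  intro p hp u v
  have hαp := hα.differentiableAt (hs.mem_nhds hp)
  have hβp := hβ.differentiableAt (hs.mem_nhds hp)
  rw [fderivWithin_of_isOpen hs hp, fderiv_planarForm_apply hαp hβp,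
    fderiv_planarForm_apply hαp hβp, planarForm_apply, planarForm_apply,
    clm_real_prod_apply (fderiv ℝ α p) u, clm_real_prod_apply (fderiv ℝ α p) v,
    clm_real_prod_apply (fderiv ℝ β p) u, clm_real_prod_apply (fderiv ℝ β p) v]
  have hcurv := congr((u.1 * v.2 - u.2 * v.1) • $(hcompat p hp))
  rw [smul_zero] at hcurv
  rw [← sub_eq_zero, ← hcurv]
  simp only [ContinuousLinearMap.add_comp, ContinuousLinearMap.comp_add,
    ContinuousLinearMap.smul_comp, ContinuousLinearMap.comp_smul]
  module

lemma isParallelOn_planarForm_iff (hs : IsOpen s) (hy : DifferentiableOn ℝ y s) :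
    IsParallelOn (planarForm α β) s y ↔
      ∀ p ∈ s, fderiv ℝ y p (0, 1) = α p (y p) ∧ fderiv ℝ y p (1, 0) = β p (y p) := by
  refine forall₂_congr fun p hp ↦ ?_
  have hyp : HasFDerivAt y (fderiv ℝ y p) p :=
    (hy.differentiableAt (hs.mem_nhds hp)).hasFDerivAt
  constructor
  · intro h
    simp [(h.hasFDerivAt (hs.mem_nhds hp)).fderiv, planarForm_apply]
  · rintro ⟨ht, hx⟩
    have hflip : (planarForm α β p).flip (y p) = fderiv ℝ y p := by
      ext <;> simp [planarForm_apply, ht, hx]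
    exact hflip ▸ hyp.hasFDerivWithinAt

end PlanarConnection

section Matrices

variable {ι : Type*} [Fintype ι] {A B : ℝ × ℝ → Matrix ι ι ℝ} {s : Set (ℝ × ℝ)}

/-- Matrix-vector multiplication as a continuous bilinear map, turning a matrix into an operator. -/
noncomputable def mulVecCLM :
    Matrix ι ι ℝ →L[ℝ] (ι → ℝ) →L[ℝ] (ι → ℝ) :=
  (Matrix.mulVecBilin ℝ ℝ).toContinuousBilinearMap

@[simp]
lemma mulVecCLM_apply (M : Matrix ι ι ℝ) (v : ι → ℝ) : mulVecCLM M v = M *ᵥ v := rfl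

lemma mulVecCLM_mul (M N : Matrix ι ι ℝ) : mulVecCLM (M * N) = mulVecCLM M ∘L mulVecCLM N := by
  ext1 v
  simp only [mulVecCLM_apply, ContinuousLinearMap.comp_apply, mulVec_mulVec]

lemma contDiffOn_mulVecCLM {k : WithTop ℕ∞} (hA : ContDiffOn ℝ k A s) :
    ContDiffOn ℝ k (fun p ↦ mulVecCLM (A p)) s :=
  contDiffOn_const.clm_apply hA

lemma fderiv_mulVecCLM {p : ℝ × ℝ} (hA : DifferentiableAt ℝ A p) :
    fderiv ℝ (fun p ↦ mulVecCLM (A p)) p = mulVecCLM ∘L fderiv ℝ A p :=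
  (mulVecCLM.hasFDerivAt.comp p hA.hasFDerivAt).fderiv

lemma isFlatOn_planarForm_mulVecCLM (hs : IsOpen s)
    (hA : DifferentiableOn ℝ A s) (hB : DifferentiableOn ℝ B s)
    (hcompat : ∀ p ∈ s,
      A p * B p - B p * A p + fderiv ℝ A p (1, 0) - fderiv ℝ B p (0, 1) = 0) :
    IsFlatOn (planarForm (fun p ↦ mulVecCLM (A p)) (fun p ↦ mulVecCLM (B p))) s := by
  refine isFlatOn_planarForm hs (mulVecCLM.differentiable.comp_differentiableOn hA)
    (mulVecCLM.differentiable.comp_differentiableOn hB) fun p hp ↦ ?_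
  rw [fderiv_mulVecCLM (hA.differentiableAt (hs.mem_nhds hp)),
    fderiv_mulVecCLM (hB.differentiableAt (hs.mem_nhds hp))]
  simp only [ContinuousLinearMap.comp_apply, ← mulVecCLM_mul, ← map_sub, ← map_add,
    hcompat p hp, map_zero]

lemma interior_Icc_prod_Icc (a b c d : ℝ) :
    interior (Icc a b ×ˢ Icc c d) = Ioo a b ×ˢ Ioo c d := by
  rw [interior_prod_eq, interior_Icc, interior_Icc]

lemma nonempty_interior_Icc_prod_Icc {a b c d : ℝ} (hab : a < b) (hcd : c < d) :
    (interior (Icc a b ×ˢ Icc c d)).Nonempty := by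
  rw [interior_Icc_prod_Icc]
  exact (nonempty_Ioo.2 hab).prod (nonempty_Ioo.2 hcd)

lemma isOverdetSol_iff_isParallelOn {n : ℕ} {ℓ T : ℝ}
    {A B : ℝ × ℝ → Matrix (Fin n) (Fin n) ℝ} {y_in : Fin n → ℝ} {y : ℝ × ℝ → Fin n → ℝ} :
    IsOverdetSol ℓ T A B y_in y ↔ ContDiffOn ℝ 1 y (Icc 0 ℓ ×ˢ Icc 0 T) ∧
      IsParallelOn (planarForm (fun p ↦ mulVecCLM (A p)) (fun p ↦ mulVecCLM (B p)))
        (interior (Icc 0 ℓ ×ˢ Icc 0 T)) y ∧ y (0, 0) = y_in := by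
  refine and_congr_right fun hy ↦ and_congr_left' ?_
  rw [isParallelOn_planarForm_iff isOpen_interior
    ((hy.differentiableOn one_ne_zero).mono interior_subset), interior_Icc_prod_Icc]
  simp only [mulVecCLM_apply]

end Matrices

theorem stmt_10_general {P E : Type*} [NormedAddCommGroup P] [NormedSpace ℝ P]
    [NormedAddCommGroup E] [NormedSpace ℝ E] [CompleteSpace E] {ω : P → P →L[ℝ] E →L[ℝ] E}
    {s : Set P} {p₀ : P} (hs : Convex ℝ s) (hne : (interior s).Nonempty)
    (hω : ContDiffOn ℝ 1 ω s) (hflat : IsFlatOn ω (interior s)) (hp₀ : p₀ ∈ s) (y₀ : E) :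
    ∃ y, (ContDiffOn ℝ 1 y s ∧ IsParallelOn ω (interior s) y ∧ y p₀ = y₀) ∧
      ∀ y', ContDiffOn ℝ 1 y' s ∧ IsParallelOn ω (interior s) y' ∧ y' p₀ = y₀ →
        EqOn y y' s := by
  have hs' : UniqueDiffOn ℝ s := uniqueDiffOn_convex hs hne
  obtain ⟨y, hy, hy₀⟩ :=
    (hflat.of_interior hs hne hω).exists_isParallelOn hs hs' hω hp₀ y₀
  refine ⟨y, ⟨hy.contDiffOn hs' hω.continuousOn, hy.mono interior_subset, hy₀⟩, ?_⟩
  rintro y' ⟨hy'₁, hy', hy'₀⟩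
  exact hy.eqOn (hy'.of_interior hs hne hω.continuousOn hy'₁) hs hω.continuousOn hp₀
    (hy₀.trans hy'₀.symm)

/-- Existence and uniqueness for the seemingly overdetermined linear first-order system
under the compatibility condition `AB − BA + ∂ₓA − ∂ₜB = 0`. -/
theorem stmt_10 (ℓ T : ℝ) (hℓ : 0 < ℓ) (hT : 0 < T) (n : ℕ) (hn : 1 ≤ n)
    (A B : ℝ × ℝ → Matrix (Fin n) (Fin n) ℝ)
    (hA : ContDiffOn ℝ 1 A (Set.Icc 0 ℓ ×ˢ Set.Icc 0 T))
    (hB : ContDiffOn ℝ 1 B (Set.Icc 0 ℓ ×ˢ Set.Icc 0 T))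
    (hcompat : ∀ p ∈ Set.Ioo (0 : ℝ) ℓ ×ˢ Set.Ioo (0 : ℝ) T,
      A p * B p - B p * A p
        + fderiv ℝ A p ((1 : ℝ), (0 : ℝ)) - fderiv ℝ B p ((0 : ℝ), (1 : ℝ)) = 0)
    (y_in : Fin n → ℝ) :
    ∃ y : ℝ × ℝ → (Fin n → ℝ), IsOverdetSol ℓ T A B y_in y ∧
      ∀ y' : ℝ × ℝ → (Fin n → ℝ), IsOverdetSol ℓ T A B y_in y' →
        Set.EqOn y y' (Set.Icc 0 ℓ ×ˢ Set.Icc 0 T) := by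
  rw [← interior_Icc_prod_Icc] at hcompat
  have hflat := isFlatOn_planarForm_mulVecCLM isOpen_interior
    ((hA.differentiableOn one_ne_zero).mono interior_subset)
    ((hB.differentiableOn one_ne_zero).mono interior_subset) hcompat
  simp only [isOverdetSol_iff_isParallelOn]
  exact stmt_10_general ((convex_Icc 0 ℓ).prod (convex_Icc 0 T))
    (nonempty_interior_Icc_prod_Icc hℓ hT)
    (contDiffOn_planarForm (contDiffOn_mulVecCLM hA) (contDiffOn_mulVecCLM hB)) hflat
    ⟨left_mem_Icc.2 hℓ.le, left_mem_Icc.2 hT.le⟩ y_in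
end

section
/- Let ℓ > 0 and T > 0, and let Υ_c : [0, ℓ] → ℝ³ be continuously differentiable. Let p : [0, ℓ] × [0, T] → ℝ³ and R : [0, ℓ] × [0, T] → ℝ^{3×3} be twice continuously differentiable with R(x,t)ᵀ R(x,t) = I₃ and det R(x,t) = 1 for all (x,t). Define v₁ = Rᵀ ∂ₜp, v₂ = vec(Rᵀ ∂ₜR), s₁ = Rᵀ ∂ₓp − e₁, and s₂ = vec(Rᵀ ∂ₓR) − Υ_c (all functions of (x,t) with values in ℝ³, Υ_c evaluated at x). Then, on (0, ℓ) × (0, T): ∂ₜ s₁ = ∂ₓ v₁ + Υ_c × v₁ + e₁ × v₂ − v₂ × s₁ − v₁ × s₂, and ∂ₜ s₂ = ∂ₓ v₂ + Υ_c × v₂ − v₂ × s₂. -/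
open Matrix

attribute [local instance] Matrix.normedAddCommGroup Matrix.normedSpace

/-- The cross product on `ℝ³`. -/
def cross (u v : Fin 3 → ℝ) : Fin 3 → ℝ :=
  ![u 1 * v 2 - u 2 * v 1, u 2 * v 0 - u 0 * v 2, u 0 * v 1 - u 1 * v 0]

/-- `vec A = (A₃₂, A₁₃, A₂₁)`, so that `vec û = u` for the cross-product matrix `û`. -/
def vecOf (A : Matrix (Fin 3) (Fin 3) ℝ) : Fin 3 → ℝ := ![A 2 1, A 0 2, A 1 0]

/-- `e₁ = (1, 0, 0)`. -/
def e1v : Fin 3 → ℝ := ![1, 0, 0]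

/-- Linear velocity `v₁ = Rᵀ ∂ₜ p` in the body-attached frame. -/
noncomputable def v1f (p : ℝ × ℝ → (Fin 3 → ℝ)) (R : ℝ × ℝ → Matrix (Fin 3) (Fin 3) ℝ) :
    ℝ × ℝ → (Fin 3 → ℝ) :=
  fun pt => (R pt)ᵀ *ᵥ fderiv ℝ p pt ((0 : ℝ), (1 : ℝ))

/-- Angular velocity `v₂ = vec(Rᵀ ∂ₜ R)` in the body-attached frame. -/
noncomputable def v2f (R : ℝ × ℝ → Matrix (Fin 3) (Fin 3) ℝ) : ℝ × ℝ → (Fin 3 → ℝ) :=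
  fun pt => vecOf ((R pt)ᵀ * fderiv ℝ R pt ((0 : ℝ), (1 : ℝ)))

/-- Linear strain `s₁ = Rᵀ ∂ₓ p − e₁`. -/
noncomputable def s1f (p : ℝ × ℝ → (Fin 3 → ℝ)) (R : ℝ × ℝ → Matrix (Fin 3) (Fin 3) ℝ) :
    ℝ × ℝ → (Fin 3 → ℝ) :=
  fun pt => (R pt)ᵀ *ᵥ fderiv ℝ p pt ((1 : ℝ), (0 : ℝ)) - e1v

/-- Angular strain `s₂ = vec(Rᵀ ∂ₓ R) − Υ_c`. -/
noncomputable def s2f (R : ℝ × ℝ → Matrix (Fin 3) (Fin 3) ℝ) (Υc : ℝ → (Fin 3 → ℝ)) :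
    ℝ × ℝ → (Fin 3 → ℝ) :=
  fun pt => vecOf ((R pt)ᵀ * fderiv ℝ R pt ((1 : ℝ), (0 : ℝ))) - Υc pt.1

/-!
Along an orthogonal frame field `R`, put `Ω_w = Rᵀ ∂_w R` and `y_w = Rᵀ ∂_w p`. Differentiating
`Rᵀ R = 1` shows that `Ω_w` is skew-symmetric, hence `∂_w Rᵀ = -Ω_w Rᵀ`. By symmetry of second
derivatives, antisymmetrising `∂_v y_w` and `∂_v Ω_w` in `(v, w)` leaves only the terms in which
`Rᵀ` is differentiated:
`∂_v y_w - ∂_w y_v = Ω_w y_v - Ω_v y_w` and `∂_v Ω_w - ∂_w Ω_v = [Ω_w, Ω_v]`.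
In dimension three `vec` turns the action of skew-symmetric matrices and their commutator into
cross products, and the choice `v = ∂ₜ`, `w = ∂ₓ` gives the compatibility equations.
-/

open Filter Topology

section Bilinear

variable {E F G H : Type*} [NormedAddCommGroup E] [NormedSpace ℝ E] [NormedAddCommGroup F]
  [NormedSpace ℝ F] [NormedAddCommGroup G] [NormedSpace ℝ G] [NormedAddCommGroup H]
  [NormedSpace ℝ H] {f : E → F} {g : E → G} {x : E}

theorem hasFDerivAt_fderiv_apply_const (hg : ContDiffAt ℝ 2 g x) (w : E) :
    HasFDerivAt (fun y => fderiv ℝ g y w) ((fderiv ℝ (fderiv ℝ g) x).flip w) x := by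
  have hg' : DifferentiableAt ℝ (fderiv ℝ g) x :=
    (hg.fderiv_right (m := 1) (by norm_num)).differentiableAt one_ne_zero
  simpa using hg'.hasFDerivAt.clm_apply (hasFDerivAt_const w x)

theorem differentiableAt_bilinear_fderiv (B : F →L[ℝ] G →L[ℝ] H) (hf : DifferentiableAt ℝ f x)
    (hg : ContDiffAt ℝ 2 g x) (w : E) :
    DifferentiableAt ℝ (fun y => B (f y) (fderiv ℝ g y w)) x :=
  (B.hasFDerivAt_of_bilinear hf.hasFDerivAt
    (hasFDerivAt_fderiv_apply_const hg w)).differentiableAt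

-- This is `d(f · dg) = df ∧ dg`, the product being `B`.
theorem fderiv_bilinear_fderiv_sub_swap (B : F →L[ℝ] G →L[ℝ] H) (hf : DifferentiableAt ℝ f x)
    (hg : ContDiffAt ℝ 2 g x) (v w : E) :
    fderiv ℝ (fun y => B (f y) (fderiv ℝ g y w)) x v
        - fderiv ℝ (fun y => B (f y) (fderiv ℝ g y v)) x w
      = B (fderiv ℝ f x v) (fderiv ℝ g x w) - B (fderiv ℝ f x w) (fderiv ℝ g x v) := by
  have leibniz (u u' : E) : fderiv ℝ (fun y => B (f y) (fderiv ℝ g y u)) x u'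
      = B (f x) (fderiv ℝ (fderiv ℝ g) x u' u) + B (fderiv ℝ f x u') (fderiv ℝ g x u) := by
    rw [(B.hasFDerivAt_of_bilinear hf.hasFDerivAt (hasFDerivAt_fderiv_apply_const hg u)).fderiv]
    simp
  have hsymm : fderiv ℝ (fderiv ℝ g) x v w = fderiv ℝ (fderiv ℝ g) x w v :=
    (hg.isSymmSndFDerivAt (by simp)).eq v w
  rw [leibniz, leibniz, hsymm, add_sub_add_left_eq_sub]

end Bilinear

section OrthogonalFrame

variable {k m n : Type*} [Fintype k] [Fintype m] [Fintype n]

/-- The pairing `(A, B) ↦ Aᵀ * B` of real matrices as a continuous bilinear map, so that the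
product rule for bilinear maps applies to it. -/
noncomputable def transposeMulL :
    Matrix k m ℝ →L[ℝ] Matrix k n ℝ →L[ℝ] Matrix m n ℝ :=
  (LinearMap.mk₂ ℝ (fun A B => Aᵀ * B) (by simp [Matrix.add_mul]) (by simp)
    (by simp [Matrix.mul_add]) (by simp)).toContinuousBilinearMap

/-- The pairing `(A, u) ↦ Aᵀ *ᵥ u` of real matrices and vectors as a continuous bilinear map, so
that the product rule for bilinear maps applies to it. -/
noncomputable def transposeMulVecL : Matrix k m ℝ →L[ℝ] (k → ℝ) →L[ℝ] (m → ℝ) :=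
  (LinearMap.mk₂ ℝ (fun A u => Aᵀ *ᵥ u) (by simp [add_mulVec]) (by simp [smul_mulVec])
    (by simp [mulVec_add]) (by simp [mulVec_smul])).toContinuousBilinearMap

variable {E : Type*} [NormedAddCommGroup E] [NormedSpace ℝ E]

/-- The directional derivative `Rᵀ ∂_w p` of a position field `p`, expressed in the moving frame
`R`. -/
noncomputable def frameVelocity (R : E → Matrix n n ℝ) (p : E → n → ℝ) (w : E) : E → n → ℝ :=
  fun x => (R x)ᵀ *ᵥ fderiv ℝ p x w

/-- The infinitesimal rotation `Rᵀ ∂_w R` of the moving frame `R` in the direction `w`, as a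
matrix expressed in the frame itself. -/
noncomputable def frameSpin (R : E → Matrix n n ℝ) (w : E) : E → Matrix n n ℝ :=
  fun x => (R x)ᵀ * fderiv ℝ R x w

variable {R : E → Matrix n n ℝ} {p : E → n → ℝ} {x : E}

theorem differentiableAt_frameSpin (hR : ContDiffAt ℝ 2 R x) (w : E) :
    DifferentiableAt ℝ (frameSpin R w) x :=
  differentiableAt_bilinear_fderiv transposeMulL (hR.differentiableAt two_ne_zero) hR w

variable [DecidableEq n]

theorem transpose_frameSpin (hR : DifferentiableAt ℝ R x) (hO : ∀ᶠ y in 𝓝 x, (R y)ᵀ * R y = 1)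
    (w : E) : (frameSpin R w x)ᵀ = -frameSpin R w x := by
  have hconst : fderiv ℝ (fun y => (R y)ᵀ * R y) x = 0 := by
    rw [EventuallyEq.fderiv_eq (f := fun _ => (1 : Matrix n n ℝ)) hO, fderiv_fun_const]
    rfl
  have hleibniz : fderiv ℝ (fun y => (R y)ᵀ * R y) x w
      = (R x)ᵀ * fderiv ℝ R x w + (fderiv ℝ R x w)ᵀ * R x :=
    DFunLike.congr_fun (transposeMulL.fderiv_of_bilinear hR hR) w
  rw [hconst] at hleibniz
  rw [frameSpin, transpose_mul, transpose_transpose]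
  exact eq_neg_of_add_eq_zero_right hleibniz.symm

theorem transpose_fderiv_frame (hR : DifferentiableAt ℝ R x)
    (hO : ∀ᶠ y in 𝓝 x, (R y)ᵀ * R y = 1) (w : E) :
    (fderiv ℝ R x w)ᵀ = -(frameSpin R w x * (R x)ᵀ) := by
  have hO' : R x * (R x)ᵀ = 1 := mul_eq_one_comm.1 hO.self_of_nhds
  rw [← Matrix.neg_mul, ← transpose_frameSpin hR hO, frameSpin, transpose_mul,
    transpose_transpose, Matrix.mul_assoc, hO', Matrix.mul_one]

theorem fderiv_frameVelocity_sub_swap (hR : DifferentiableAt ℝ R x) (hp : ContDiffAt ℝ 2 p x)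
    (hO : ∀ᶠ y in 𝓝 x, (R y)ᵀ * R y = 1) (v w : E) :
    fderiv ℝ (frameVelocity R p w) x v - fderiv ℝ (frameVelocity R p v) x w
      = frameSpin R w x *ᵥ frameVelocity R p v x - frameSpin R v x *ᵥ frameVelocity R p w x := by
  calc
    _ = (fderiv ℝ R x v)ᵀ *ᵥ fderiv ℝ p x w - (fderiv ℝ R x w)ᵀ *ᵥ fderiv ℝ p x v :=
      fderiv_bilinear_fderiv_sub_swap transposeMulVecL hR hp v w
    _ = _ := by
      rw [transpose_fderiv_frame hR hO, transpose_fderiv_frame hR hO, neg_mulVec, neg_mulVec,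
        neg_sub_neg, frameVelocity, frameVelocity, mulVec_mulVec, mulVec_mulVec]

-- The Maurer–Cartan equation for the pullback of the Maurer–Cartan form of `O(n)` along `R`.
theorem fderiv_frameSpin_sub_swap (hR : ContDiffAt ℝ 2 R x)
    (hO : ∀ᶠ y in 𝓝 x, (R y)ᵀ * R y = 1) (v w : E) :
    fderiv ℝ (frameSpin R w) x v - fderiv ℝ (frameSpin R v) x w
      = ⁅frameSpin R w x, frameSpin R v x⁆ := by
  have hR' : DifferentiableAt ℝ R x := hR.differentiableAt two_ne_zero
  calc
    _ = (fderiv ℝ R x v)ᵀ * fderiv ℝ R x w - (fderiv ℝ R x w)ᵀ * fderiv ℝ R x v :=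
      fderiv_bilinear_fderiv_sub_swap transposeMulL hR' hR v w
    _ = frameSpin R w x * frameSpin R v x - frameSpin R v x * frameSpin R w x := by
      rw [transpose_fderiv_frame hR' hO, transpose_fderiv_frame hR' hO, Matrix.neg_mul,
        Matrix.neg_mul, neg_sub_neg, Matrix.mul_assoc, Matrix.mul_assoc]
      rfl
    _ = _ := (Ring.lie_def _ _).symm

end OrthogonalFrame

section SkewSymmetric

variable {A B : Matrix (Fin 3) (Fin 3) ℝ}

theorem cross_eq_crossProduct (u v : Fin 3 → ℝ) : cross u v = u ⨯₃ v := rfl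

/-- The skew-symmetric matrix `û` of the linear map `ζ ↦ u × ζ`. -/
def crossMatrix (u : Fin 3 → ℝ) : Matrix (Fin 3) (Fin 3) ℝ :=
  !![0, -u 2, u 1; u 2, 0, -u 0; -u 1, u 0, 0]

theorem crossMatrix_vecOf (hA : Aᵀ = -A) : crossMatrix (vecOf A) = A := by
  have hentry (i j : Fin 3) : A j i = -A i j := congrFun₂ hA i j
  have hdiag (i : Fin 3) : A i i = 0 := self_eq_neg.1 (hentry i i)
  ext i j
  fin_cases i <;> fin_cases j <;> simp [crossMatrix, vecOf, hdiag, ← hentry]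

theorem crossMatrix_mulVec (u v : Fin 3 → ℝ) : crossMatrix u *ᵥ v = u ⨯₃ v := by
  ext i
  fin_cases i <;> simp [crossMatrix, cross_apply, mulVec, dotProduct, Fin.sum_univ_three] <;> ring

theorem vecOf_lie_crossMatrix (u v : Fin 3 → ℝ) :
    vecOf ⁅crossMatrix u, crossMatrix v⁆ = u ⨯₃ v := by
  ext i
  fin_cases i <;>
    simp [crossMatrix, vecOf, Ring.lie_def, cross_apply] <;> ring

theorem mulVec_eq_vecOf_cross (hA : Aᵀ = -A) (u : Fin 3 → ℝ) : A *ᵥ u = vecOf A ⨯₃ u := by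
  rw [← crossMatrix_mulVec, crossMatrix_vecOf hA]

theorem vecOf_lie (hA : Aᵀ = -A) (hB : Bᵀ = -B) : vecOf ⁅A, B⁆ = vecOf A ⨯₃ vecOf B := by
  rw [← vecOf_lie_crossMatrix, crossMatrix_vecOf hA, crossMatrix_vecOf hB]

/-- `vecOf` as a continuous linear map, so that it commutes with differentiation. -/
noncomputable def vecOfL : Matrix (Fin 3) (Fin 3) ℝ →L[ℝ] (Fin 3 → ℝ) :=
  LinearMap.toContinuousLinearMap
    { toFun := vecOf
      map_add' := fun A B => by simp [vecOf]
      map_smul' := fun c A => by simp [vecOf] }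

theorem vecOf_sub (A B : Matrix (Fin 3) (Fin 3) ℝ) : vecOf (A - B) = vecOf A - vecOf B :=
  map_sub vecOfL A B

theorem hasFDerivAt_vecOf_comp {E : Type*} [NormedAddCommGroup E] [NormedSpace ℝ E]
    {M : E → Matrix (Fin 3) (Fin 3) ℝ} {x : E} (hM : DifferentiableAt ℝ M x) :
    HasFDerivAt (fun y => vecOf (M y)) (vecOfL.comp (fderiv ℝ M x)) x :=
  vecOfL.hasFDerivAt.comp x hM.hasFDerivAt

end SkewSymmetric

section Beam

variable {p : ℝ × ℝ → (Fin 3 → ℝ)} {R : ℝ × ℝ → Matrix (Fin 3) (Fin 3) ℝ} {Υc : ℝ → (Fin 3 → ℝ)}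
  {pt : ℝ × ℝ}

theorem fderiv_s1f_time :
    fderiv ℝ (s1f p R) pt (0, 1) = fderiv ℝ (frameVelocity R p (1, 0)) pt (0, 1) :=
  DFunLike.congr_fun (fderiv_sub_const (f := frameVelocity R p (1, 0)) e1v) (0, 1)

theorem fderiv_s2f_time (hR : ContDiffAt ℝ 2 R pt) (hΥc : DifferentiableAt ℝ Υc pt.1) :
    fderiv ℝ (s2f R Υc) pt (0, 1) = vecOf (fderiv ℝ (frameSpin R (1, 0)) pt (0, 1)) := by
  have hspin := hasFDerivAt_vecOf_comp (differentiableAt_frameSpin hR (1, 0))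
  have hcurv : HasFDerivAt (fun q : ℝ × ℝ => Υc q.1)
      ((fderiv ℝ Υc pt.1).comp (ContinuousLinearMap.fst ℝ ℝ ℝ)) pt :=
    hΥc.hasFDerivAt.comp pt hasFDerivAt_fst
  have hcurv_time : (fderiv ℝ Υc pt.1).comp (ContinuousLinearMap.fst ℝ ℝ ℝ) (0, 1) = 0 := by simp
  calc fderiv ℝ (s2f R Υc) pt (0, 1)
      = vecOf (fderiv ℝ (frameSpin R (1, 0)) pt (0, 1))
        - (fderiv ℝ Υc pt.1).comp (ContinuousLinearMap.fst ℝ ℝ ℝ) (0, 1) :=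
      DFunLike.congr_fun (hspin.sub hcurv).fderiv (0, 1)
    _ = vecOf (fderiv ℝ (frameSpin R (1, 0)) pt (0, 1)) := by rw [hcurv_time, sub_zero]

theorem fderiv_v2f_space (hR : ContDiffAt ℝ 2 R pt) :
    fderiv ℝ (v2f R) pt (1, 0) = vecOf (fderiv ℝ (frameSpin R (0, 1)) pt (1, 0)) :=
  DFunLike.congr_fun (hasFDerivAt_vecOf_comp (differentiableAt_frameSpin hR (0, 1))).fderiv (1, 0)

theorem frameVelocity_space_eq_s1f_add : frameVelocity R p (1, 0) pt = s1f p R pt + e1v :=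
  (sub_add_cancel _ _).symm

theorem vecOf_frameSpin_space_eq_s2f_add : vecOf (frameSpin R (1, 0) pt) = s2f R Υc pt + Υc pt.1 :=
  (sub_add_cancel _ _).symm

theorem linearStrain_compatibility (hp : ContDiffAt ℝ 2 p pt) (hR : DifferentiableAt ℝ R pt)
    (hO : ∀ᶠ q in 𝓝 pt, (R q)ᵀ * R q = 1) :
    fderiv ℝ (s1f p R) pt (0, 1) = fderiv ℝ (v1f p R) pt (1, 0)
      + cross (Υc pt.1) (v1f p R pt) + cross e1v (v2f R pt)
      - cross (v2f R pt) (s1f p R pt) - cross (v1f p R pt) (s2f R Υc pt) := by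
  have hcurl : fderiv ℝ (s1f p R) pt (0, 1) - fderiv ℝ (v1f p R) pt (1, 0)
      = (s2f R Υc pt + Υc pt.1) ⨯₃ v1f p R pt - v2f R pt ⨯₃ (s1f p R pt + e1v) := by
    rw [fderiv_s1f_time, ← frameVelocity_space_eq_s1f_add, ← vecOf_frameSpin_space_eq_s2f_add]
    refine (fderiv_frameVelocity_sub_swap hR hp hO (0, 1) (1, 0)).trans ?_
    rw [mulVec_eq_vecOf_cross (transpose_frameSpin hR hO _),
      mulVec_eq_vecOf_cross (transpose_frameSpin hR hO _)]
    rfl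
  rw [eq_add_of_sub_eq hcurl]
  simp only [cross_eq_crossProduct, map_add, LinearMap.add_apply, ← cross_anticomm (v2f R pt) e1v,
    ← cross_anticomm (s2f R Υc pt) (v1f p R pt)]
  abel

theorem angularStrain_compatibility (hR : ContDiffAt ℝ 2 R pt) (hΥc : DifferentiableAt ℝ Υc pt.1)
    (hO : ∀ᶠ q in 𝓝 pt, (R q)ᵀ * R q = 1) :
    fderiv ℝ (s2f R Υc) pt (0, 1) = fderiv ℝ (v2f R) pt (1, 0)
      + cross (Υc pt.1) (v2f R pt) - cross (v2f R pt) (s2f R Υc pt) := by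
  have hskew := transpose_frameSpin (hR.differentiableAt two_ne_zero) hO
  have hcurl : fderiv ℝ (s2f R Υc) pt (0, 1) - fderiv ℝ (v2f R) pt (1, 0)
      = (s2f R Υc pt + Υc pt.1) ⨯₃ v2f R pt := by
    rw [fderiv_s2f_time hR hΥc, fderiv_v2f_space hR, ← vecOf_sub,
      fderiv_frameSpin_sub_swap hR hO, vecOf_lie (hskew _) (hskew _),
      ← vecOf_frameSpin_space_eq_s2f_add]
    rfl
  rw [eq_add_of_sub_eq hcurl]
  simp only [cross_eq_crossProduct, map_add, LinearMap.add_apply,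
    ← cross_anticomm (s2f R Υc pt) (v2f R pt)]
  abel

end Beam

theorem stmt_15_general (Υc : ℝ → (Fin 3 → ℝ)) (p : ℝ × ℝ → (Fin 3 → ℝ))
    (R : ℝ × ℝ → Matrix (Fin 3) (Fin 3) ℝ) (pt : ℝ × ℝ) (hΥc : DifferentiableAt ℝ Υc pt.1)
    (hp : ContDiffAt ℝ 2 p pt) (hR : ContDiffAt ℝ 2 R pt)
    (hO : ∀ᶠ q in 𝓝 pt, (R q)ᵀ * R q = 1) :
    (fderiv ℝ (s1f p R) pt ((0 : ℝ), (1 : ℝ))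
        = fderiv ℝ (v1f p R) pt ((1 : ℝ), (0 : ℝ))
          + cross (Υc pt.1) (v1f p R pt) + cross e1v (v2f R pt)
          - cross (v2f R pt) (s1f p R pt) - cross (v1f p R pt) (s2f R Υc pt)) ∧
    (fderiv ℝ (s2f R Υc) pt ((0 : ℝ), (1 : ℝ))
        = fderiv ℝ (v2f R) pt ((1 : ℝ), (0 : ℝ))
          + cross (Υc pt.1) (v2f R pt) - cross (v2f R pt) (s2f R Υc pt)) :=
  ⟨linearStrain_compatibility hp (hR.differentiableAt two_ne_zero) hO,
    angularStrain_compatibility hR hΥc hO⟩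

/-- The compatibility equations (the last six equations of the IGEB model) hold
automatically for every admissible `(p, R)`. -/
theorem stmt_15 (ℓ T : ℝ) (hℓ : 0 < ℓ) (hT : 0 < T)
    (Υc : ℝ → (Fin 3 → ℝ)) (hΥc : ContDiffOn ℝ 1 Υc (Set.Icc 0 ℓ))
    (p : ℝ × ℝ → (Fin 3 → ℝ)) (R : ℝ × ℝ → Matrix (Fin 3) (Fin 3) ℝ)
    (hp : ContDiffOn ℝ 2 p (Set.Icc 0 ℓ ×ˢ Set.Icc 0 T))
    (hR : ContDiffOn ℝ 2 R (Set.Icc 0 ℓ ×ˢ Set.Icc 0 T))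
    (hSO : ∀ pt ∈ Set.Icc (0 : ℝ) ℓ ×ˢ Set.Icc (0 : ℝ) T,
      (R pt)ᵀ * R pt = 1 ∧ (R pt).det = 1) :
    ∀ pt ∈ Set.Ioo (0 : ℝ) ℓ ×ˢ Set.Ioo (0 : ℝ) T,
      (fderiv ℝ (s1f p R) pt ((0 : ℝ), (1 : ℝ))
          = fderiv ℝ (v1f p R) pt ((1 : ℝ), (0 : ℝ))
            + cross (Υc pt.1) (v1f p R pt) + cross e1v (v2f R pt)
            - cross (v2f R pt) (s1f p R pt) - cross (v1f p R pt) (s2f R Υc pt)) ∧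
      (fderiv ℝ (s2f R Υc) pt ((0 : ℝ), (1 : ℝ))
          = fderiv ℝ (v2f R) pt ((1 : ℝ), (0 : ℝ))
            + cross (Υc pt.1) (v2f R pt) - cross (v2f R pt) (s2f R Υc pt)) := by
  intro pt hpt
  have hx : Set.Icc 0 ℓ ∈ 𝓝 pt.1 := Icc_mem_nhds hpt.1.1 hpt.1.2
  have hrect : Set.Icc 0 ℓ ×ˢ Set.Icc 0 T ∈ 𝓝 pt :=
    prod_mem_nhds hx (Icc_mem_nhds hpt.2.1 hpt.2.2)
  exact stmt_15_general Υc p R pt ((hΥc.contDiffAt hx).differentiableAt one_ne_zero)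
    (hp.contDiffAt hrect) (hR.contDiffAt hrect) (mem_of_superset hrect fun q hq => (hSO q hq).1)
end
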